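/- arXiv:1903.10656 — 5 statements merged into one kernel-verified Lean document; each statement's English description precedes it below -/
import Mathlib

section
/- Let φ ∈ 𝒮(ℝ^d) and h > 0. For every Schwartz function f ∈ 𝒮(ℝ^d) and every ζ ∈ h⁻¹𝕋^d, Q_h f(ζ) = ∑_{n∈ℤ^d} conj(φ̂(hζ + n)) f(ζ + h⁻¹ n), where Q_h = F_h P_h 𝓕*. Concretely: h^d ∑_{z∈hℤ^d} e^{−2πi z·ζ} ( h^{−d} ∫_{ℝ^d} conj(φ(h⁻¹(x−z))) (∫_{ℝ^d} e^{2πi x·ξ} f(ξ) dξ) dx ) = ∑_{n∈ℤ^d} conj(φ̂(hζ + n)) f(ζ + h⁻¹ n). -/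
open MeasureTheory Complex Real
open scoped FourierTransform InnerProductSpace ComplexConjugate

noncomputable section

abbrev Euc (d : ℕ) : Type := EuclideanSpace ℝ (Fin d)
abbrev Zd (d : ℕ) : Type := Fin d → ℤ

/-- The lattice point `hz ∈ ℝ^d` associated to `z ∈ ℤ^d`. -/
def latPt (d : ℕ) (h : ℝ) (z : Zd d) : Euc d :=
  (EuclideanSpace.equiv (Fin d) ℝ).symm fun j => h * (z j : ℝ)

/-- The vector in `ℝ^d` associated to `n ∈ ℤ^d`. -/
def latVec (d : ℕ) (n : Zd d) : Euc d :=
  (EuclideanSpace.equiv (Fin d) ℝ).symm fun j => (n j : ℝ)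

/-! By Parseval, the integral of `F = 𝓕⁻ f` against a translate of `conj φ` is a value of the
inverse Fourier transform of `g = conj (𝓕 φ) * f`. Hence for `h = 1` the samples of `F` are the
Fourier coefficients of the periodization of `g`, and the claim is the Poisson summation formula for
`g`. Dilating `F` by `h` reduces the general case to this one.

Decay of `f` makes the translates of `g` locally uniformly summable, and decay of `F` makes its
samples against translates of `φ` summable. -/

section

open Set Filter Topology Asymptotics TopologicalSpace

section Lattice

variable {d : ℕ}

lemma latVec_apply (n : Zd d) (i : Fin d) : latVec d n i = n i := rfl

lemma latVec_add (m n : Zd d) : latVec d (m + n) = latVec d m + latVec d n := by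
  ext i
  simp only [latVec_apply, PiLp.add_apply, Pi.add_apply, Int.cast_add]

lemma latVec_neg (n : Zd d) : latVec d (-n) = -latVec d n := by
  ext i
  simp only [latVec_apply, PiLp.neg_apply, Pi.neg_apply, Int.cast_neg]

lemma latVec_injective : Function.Injective (latVec d) := fun _ _ hmn ↦
  funext fun i ↦ Int.cast_injective (congrArg (fun x : Euc d ↦ x i) hmn)

lemma latPt_eq_smul_latVec (h : ℝ) (z : Zd d) : latPt d h z = h • latVec d z := rfl

lemma tendsto_latVec_cofinite : Tendsto (latVec d) cofinite (cocompact (Euc d)) := by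
  have hpi : Tendsto (fun (n : Zd d) i ↦ (n i : ℝ)) cofinite (cocompact (Fin d → ℝ)) := by
    rw [← coprodᵢ_cofinite, ← coprodᵢ_cocompact]
    exact Tendsto.pi_map_coprodᵢ fun _ ↦ Int.tendsto_coe_cofinite
  exact (EuclideanSpace.equiv (Fin d) ℝ).symm.toHomeomorph.isClosedEmbedding.tendsto_cocompact.comp
    hpi

lemma summable_norm_latVec_rpow {b : ℝ} (hb : d < b) :
    Summable fun n : Zd d ↦ ‖latVec d n‖ ^ (-b) := by
  let L : Submodule ℤ (Euc d) :=
    .span ℤ (range (EuclideanSpace.basisFun (Fin d) ℝ).toBasis)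
  have hmem (n : Zd d) : latVec d n ∈ L :=
    (Module.Basis.mem_span_iff_repr_mem ℤ _ _).2 fun i ↦ ⟨n i, by simp [latVec_apply]⟩
  have hrank : Module.finrank ℤ L = d := by
    rw [ZLattice.rank ℝ L, finrank_euclideanSpace_fin]
  have hinj : Function.Injective fun n : Zd d ↦ (⟨latVec d n, hmem n⟩ : L) := fun _ _ hmn ↦
    latVec_injective (Subtype.mk.inj hmn)
  have hsum := (ZLattice.summable_norm_rpow L (-b) (by rw [hrank]; linarith)).comp_injective hinj
  simpa only [Function.comp_def, Submodule.coe_norm] using hsum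

/-- The half-open unit cube `(0,1]^d`, a fundamental domain for `ℤ^d`. The endpoints are chosen as
in `UnitAddTorus.mFourierCoeff_eq_integral`. -/
def unitCube (d : ℕ) : Set (Euc d) := {x | ∀ i, x i ∈ Ioc (0 : ℝ) 1}

lemma measurableSet_unitCube : MeasurableSet (unitCube d) := by
  unfold unitCube
  measurability

lemma existsUnique_sub_latVec_mem_unitCube (x : Euc d) :
    ∃! n : Zd d, x - latVec d n ∈ unitCube d := by
  have hcoord (i : Fin d) : ∃! m : ℤ, x i - m ∈ Ioc (0 : ℝ) 1 := by
    simpa only [zsmul_one, zero_add] using existsUnique_sub_zsmul_mem_Ioc one_pos (x i) 0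
  choose n hn huniq using hcoord
  exact ⟨n, hn, fun m hm ↦ funext fun i ↦ huniq i (m i) (hm i)⟩

variable {E : Type*} [NormedAddCommGroup E] [NormedSpace ℝ E]

lemma hasSum_setIntegral_unitCube_add_latVec {F : Euc d → E} (hF : Integrable F) :
    HasSum (fun n : Zd d ↦ ∫ x in unitCube d, F (x + latVec d n)) (∫ x, F x) := by
  let cube (n : Zd d) : Set (Euc d) := (· - latVec d n) ⁻¹' unitCube d
  have hmeas (n : Zd d) : MeasurableSet (cube n) :=
    measurableSet_unitCube.preimage (measurable_sub_const _)
  have hdisj : Pairwise (Function.onFun Disjoint cube) := fun m n hmn ↦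
    disjoint_left.2 fun x hm hn ↦
      hmn ((existsUnique_sub_latVec_mem_unitCube x).unique hm hn)
  have hcover : ⋃ n, cube n = univ := eq_univ_of_forall fun x ↦
    mem_iUnion.2 (existsUnique_sub_latVec_mem_unitCube x).exists
  have htranslate (n : Zd d) :
      ∫ x in cube n, F x = ∫ x in unitCube d, F (x + latVec d n) := by
    rw [← (measurePreserving_add_right volume (latVec d n)).setIntegral_preimage_emb
      (measurableEmbedding_addRight _) F]
    simp only [cube, preimage_preimage, add_sub_cancel_right, preimage_id']
  have hsum := hasSum_integral_iUnion hmeas hdisj hF.integrableOn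
  simpa only [hcover, setIntegral_univ, htranslate] using hsum

lemma setIntegral_unitCube_tsum_add_latVec {F : Euc d → E} (hF : Integrable F) :
    ∫ x in unitCube d, ∑' n : Zd d, F (x + latVec d n) = ∫ x, F x := by
  rw [← integral_tsum_of_summable_integral_norm
    (fun n ↦ (hF.comp_add_right (latVec d n)).integrableOn)
    (hasSum_setIntegral_unitCube_add_latVec hF.norm).summable]
  exact (hasSum_setIntegral_unitCube_add_latVec hF).tsum_eq

end Lattice

section WienerAmalgam

variable {d : ℕ}

/-- Membership in the Wiener amalgam space `W(C, ℓ¹)`: over every compact set, the suprema of `‖f‖`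
on the integer translates of that set are summable. This is the class of functions whose
periodization converges locally uniformly. -/
def InWienerAmalgam (f : C(Euc d, ℂ)) : Prop :=
  ∀ K : Compacts (Euc d),
    Summable fun n : Zd d ↦ ‖(f.comp (.addRight (latVec d n))).restrict K‖

/-- The sum of all integer translates of `f`, with the junk value `0` if that sum does not converge
locally uniformly. -/
def periodization (f : C(Euc d, ℂ)) : C(Euc d, ℂ) :=
  ∑' n : Zd d, f.comp (.addRight (latVec d n))

lemma norm_le_norm_restrict_addRight (f : C(Euc d, ℂ)) {K : Compacts (Euc d)} (n : Zd d)
    {x : Euc d} (hx : x ∈ K) :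
    ‖f (x + latVec d n)‖ ≤ ‖(f.comp (.addRight (latVec d n))).restrict K‖ :=
  ((f.comp (.addRight (latVec d n))).restrict (K : Set (Euc d))).norm_coe_le_norm ⟨x, hx⟩

lemma inWienerAmalgam_of_isBigO {f : C(Euc d, ℂ)} {b : ℝ} (hb : d < b)
    (hf : f =O[cocompact (Euc d)] (‖·‖ ^ (-b))) : InWienerAmalgam f := by
  intro K
  obtain ⟨r, hr⟩ := K.isCompact.isBounded.subset_closedBall 0
  obtain ⟨C, hC, hfC⟩ := hf.exists_nonneg
  rw [isBigOWith_iff, ← Metric.cobounded_eq_cocompact,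
    hasBasis_cobounded_norm.eventually_iff] at hfC
  obtain ⟨R, -, hR⟩ := hfC
  have hsum : Summable fun n : Zd d ↦ C * (‖latVec d n‖ / 2) ^ (-b) := by
    simp only [div_rpow (norm_nonneg _) zero_le_two]
    exact ((summable_norm_latVec_rpow hb).div_const _).mul_left C
  have hlarge : ∀ᶠ n : Zd d in cofinite, 2 * max 0 (max r R) < ‖latVec d n‖ :=
    ((tendsto_norm_cocompact_atTop (E := Euc d)).comp tendsto_latVec_cofinite).eventually_gt_atTop _
  refine hsum.of_norm_bounded_eventually (hlarge.mono fun n hn ↦ ?_)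
  have hhalf : max 0 (max r R) < ‖latVec d n‖ / 2 := by linarith
  obtain ⟨hn0, hnr, hnR⟩ : 0 < ‖latVec d n‖ / 2 ∧ r < ‖latVec d n‖ / 2 ∧ R < ‖latVec d n‖ / 2 := by
    simpa only [max_lt_iff] using hhalf
  rw [norm_norm, ContinuousMap.norm_le _ (by positivity)]
  rintro ⟨x, hx⟩
  have hxr : ‖x‖ ≤ r := mem_closedBall_zero_iff.1 (hr hx)
  have hfar : ‖latVec d n‖ / 2 ≤ ‖x + latVec d n‖ := by
    rw [add_comm]
    linarith [norm_le_add_norm_add (latVec d n) x]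
  calc ‖f (x + latVec d n)‖
    _ ≤ C * ‖‖x + latVec d n‖ ^ (-b)‖ := hR (hnR.le.trans hfar)
    _ = C * ‖x + latVec d n‖ ^ (-b) := by rw [Real.norm_of_nonneg (by positivity)]
    _ ≤ C * (‖latVec d n‖ / 2) ^ (-b) :=
      mul_le_mul_of_nonneg_left
        (rpow_le_rpow_of_nonpos hn0 hfar (neg_nonpos.2 (d.cast_nonneg.trans hb.le))) hC

lemma InWienerAmalgam.periodization_apply {f : C(Euc d, ℂ)} (hf : InWienerAmalgam f) (x : Euc d) :
    periodization f x = ∑' n : Zd d, f (x + latVec d n) :=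
  (ContinuousMap.tsum_apply (ContinuousMap.summable_of_locally_summable_norm hf) x).symm

lemma InWienerAmalgam.periodization_add_latVec {f : C(Euc d, ℂ)} (hf : InWienerAmalgam f)
    (x : Euc d) (n : Zd d) : periodization f (x + latVec d n) = periodization f x := by
  rw [hf.periodization_apply, hf.periodization_apply,
    ← (Equiv.addLeft n).tsum_eq fun m ↦ f (x + latVec d m)]
  simp only [Equiv.coe_addLeft, latVec_add, add_assoc]

lemma exists_compacts_unitCube_subset (d : ℕ) :
    ∃ K : Compacts (Euc d), unitCube d ⊆ K := by
  refine ⟨⟨EuclideanSpace.equiv (Fin d) ℝ ⁻¹' Icc 0 1, ?_⟩, fun x hx ↦ ?_⟩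
  · exact (EuclideanSpace.equiv (Fin d) ℝ).toHomeomorph.isCompact_preimage.2 isCompact_Icc
  · exact ⟨fun i ↦ (hx i).1.le, fun i ↦ (hx i).2⟩

lemma InWienerAmalgam.integrable {f : C(Euc d, ℂ)} (hf : InWienerAmalgam f) : Integrable f := by
  obtain ⟨K, hK⟩ := exists_compacts_unitCube_subset d
  let shift (n : Zd d) : Compacts (Euc d) := K.map (· + latVec d n) (continuous_add_const _)
  have hvol (n : Zd d) : volume.real (shift n : Set (Euc d)) = volume.real (K : Set (Euc d)) := by
    simp only [shift, Compacts.coe_map, image_add_right, measureReal_def,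
      measure_preimage_add_right]
  have hsup (n : Zd d) :
      ‖f.restrict (shift n)‖ ≤ ‖(f.comp (.addRight (latVec d n))).restrict K‖ := by
    rw [ContinuousMap.norm_le _ (norm_nonneg _)]
    rintro ⟨_, x, hx, rfl⟩
    exact norm_le_norm_restrict_addRight f n hx
  refine integrable_of_summable_norm_restrict (s := shift)
    (((hf K).mul_right (volume.real (K : Set (Euc d)))).of_nonneg_of_le
      (fun n ↦ by positivity) fun n ↦ ?_) ?_
  · rw [hvol]
    gcongr
    exact hsup n
  · refine eq_univ_of_forall fun x ↦ ?_
    obtain ⟨n, hn, -⟩ := existsUnique_sub_latVec_mem_unitCube x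
    exact mem_iUnion.2 ⟨n, x - latVec d n, hK hn, sub_add_cancel _ _⟩

end WienerAmalgam

section Torus

variable {d : ℕ}

/-- The quotient map `ℝ^d → (ℝ/ℤ)^d`. -/
def toTorus (d : ℕ) : C(Euc d, UnitAddTorus (Fin d)) where
  toFun x i := (x i : UnitAddCircle)
  continuous_toFun := by fun_prop

lemma isQuotientMap_toTorus (d : ℕ) : IsQuotientMap (toTorus d) :=
  ((IsOpenQuotientMap.piMap fun _ ↦ QuotientAddGroup.isOpenQuotientMap_mk).comp
    (EuclideanSpace.equiv (Fin d) ℝ).toHomeomorph.isOpenQuotientMap).isQuotientMap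

lemma toTorus_add_latVec (x : Euc d) (n : Zd d) : toTorus d (x + latVec d n) = toTorus d x := by
  funext i
  have hint : ((n i : ℝ) : UnitAddCircle) = 0 :=
    (AddCircle.coe_eq_zero_iff 1).2 ⟨n i, zsmul_one (n i)⟩
  change ((x i + n i : ℝ) : UnitAddCircle) = x i
  rw [AddCircle.coe_add, hint, add_zero]

lemma exists_eq_add_latVec_of_toTorus_eq {x y : Euc d} (hxy : toTorus d x = toTorus d y) :
    ∃ n : Zd d, x = y + latVec d n := by
  have hcoord (i : Fin d) : ∃ n : ℤ, x i = y i + n := by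
    have hsub : ((x i - y i : ℝ) : UnitAddCircle) = 0 := sub_eq_zero.2 (congrFun hxy i)
    obtain ⟨n, hn⟩ := (AddCircle.coe_eq_zero_iff 1).1 hsub
    exact ⟨n, by rw [← zsmul_one n, hn, add_sub_cancel]⟩
  choose n hn using hcoord
  exact ⟨n, PiLp.ext hn⟩

lemma exists_comp_toTorus_eq (F : C(Euc d, ℂ)) (hF : ∀ x n, F (x + latVec d n) = F x) :
    ∃ G : C(UnitAddTorus (Fin d), ℂ), ∀ x, G (toTorus d x) = F x := by
  have hfiber (x y : Euc d) (hxy : toTorus d x = toTorus d y) : F x = F y := by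
    obtain ⟨n, rfl⟩ := exists_eq_add_latVec_of_toTorus_eq hxy
    exact hF y n
  exact ⟨(isQuotientMap_toTorus d).lift F hfiber,
    DFunLike.congr_fun ((isQuotientMap_toTorus d).lift_comp F hfiber)⟩

lemma mFourier_toTorus (m : Zd d) (x : Euc d) :
    UnitAddTorus.mFourier m (toTorus d x) = 𝐞 ⟪x, latVec d m⟫_ℝ := by
  simp only [UnitAddTorus.mFourier, toTorus, ContinuousMap.coe_mk, fourier_coe_apply,
    fourierChar_apply, PiLp.inner_apply, RCLike.inner_apply, latVec_apply, ← Complex.exp_sum]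
  simp [Finset.mul_sum, mul_assoc, mul_left_comm, mul_comm]

lemma mFourier_neg_toTorus (m : Zd d) (x : Euc d) :
    UnitAddTorus.mFourier (-m) (toTorus d x) = 𝐞 (-⟪x, latVec d m⟫_ℝ) := by
  rw [mFourier_toTorus, latVec_neg, inner_neg_right]

lemma mFourierCoeff_eq_setIntegral_unitCube (G : UnitAddTorus (Fin d) → ℂ) (m : Zd d) :
    UnitAddTorus.mFourierCoeff G m =
      ∫ x in unitCube d, UnitAddTorus.mFourier (-m) (toTorus d x) • G (toTorus d x) := by
  rw [UnitAddTorus.mFourierCoeff_eq_integral G m 0,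
    ← (PiLp.volume_preserving_toLp (Fin d)).setIntegral_preimage_emb
      (MeasurableEquiv.toLp 2 _).measurableEmbedding]
  simp only [Pi.zero_apply, zero_add]
  rfl

lemma mFourierCoeff_eq_fourier {f : C(Euc d, ℂ)} (hf : InWienerAmalgam f)
    {G : C(UnitAddTorus (Fin d), ℂ)} (hG : ∀ x, G (toTorus d x) = periodization f x)
    (m : Zd d) :
    UnitAddTorus.mFourierCoeff G m = 𝓕 ⇑f (latVec d m) := by
  rw [mFourierCoeff_eq_setIntegral_unitCube, fourier_eq,
    ← setIntegral_unitCube_tsum_add_latVec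
      ((fourierIntegral_convergent_iff (latVec d m)).2 hf.integrable)]
  refine setIntegral_congr_fun measurableSet_unitCube fun x _ ↦ ?_
  simp only [hG, hf.periodization_apply, Circle.smul_def, ← mFourier_neg_toTorus,
    toTorus_add_latVec, smul_eq_mul, tsum_mul_left]

theorem InWienerAmalgam.hasSum_fourier_latVec {f : C(Euc d, ℂ)} (hf : InWienerAmalgam f)
    (hFf : Summable fun m : Zd d ↦ 𝓕 ⇑f (latVec d m)) (x : Euc d) :
    HasSum (fun m : Zd d ↦ 𝓕 ⇑f (latVec d m) * (𝐞 ⟪x, latVec d m⟫_ℝ : ℂ))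
      (∑' n : Zd d, f (x + latVec d n)) := by
  obtain ⟨G, hG⟩ := exists_comp_toTorus_eq (periodization f) hf.periodization_add_latVec
  have hcoeff := mFourierCoeff_eq_fourier hf hG
  have hseries := UnitAddTorus.hasSum_mFourier_series_apply_of_summable
    (hFf.congr fun m ↦ (hcoeff m).symm) (toTorus d x)
  simpa only [hcoeff, mFourier_toTorus, smul_eq_mul, hG,
    hf.periodization_apply] using hseries

end Torus

lemma isBigO_comp_smul_rpow {V : Type*} [NormedAddCommGroup V] [NormedSpace ℝ V] {f : V → ℂ} {b : ℝ}
    (hf : f =O[cocompact V] (‖·‖ ^ (-b)))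
    {c : ℝ} (hc : c ≠ 0) : (fun x ↦ f (c • x)) =O[cocompact V] (‖·‖ ^ (-b)) := by
  have hcomp := hf.comp_tendsto (Homeomorph.smulOfNeZero c hc).isClosedEmbedding.tendsto_cocompact
  simp only [Function.comp_def, Homeomorph.smulOfNeZero_apply, norm_smul,
    mul_rpow (norm_nonneg _) (norm_nonneg _)] at hcomp
  exact hcomp.trans (isBigO_const_mul_self _ _ _)

section Fourier

variable {V : Type*} [NormedAddCommGroup V] [InnerProductSpace ℝ V] [FiniteDimensional ℝ V]
  [MeasurableSpace V] [BorelSpace V]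

lemma continuous_fourier {φ : V → ℂ} (hφ : Integrable φ) : Continuous (𝓕 φ) :=
  VectorFourier.fourierIntegral_continuous continuous_fourierChar continuous_inner hφ

lemma continuous_fourierInv {f : V → ℂ} (hf : Integrable f) : Continuous (𝓕⁻ f) := by
  rw [fourierInv_eq_fourier_comp_neg]
  exact continuous_fourier hf.comp_neg

lemma norm_fourier_le_integral_norm (φ : V → ℂ) (ξ : V) : ‖𝓕 φ ξ‖ ≤ ∫ x, ‖φ x‖ :=
  VectorFourier.norm_fourierIntegral_le_integral_norm _ _ _ _ _

lemma fourier_comp_sub_right (φ : V → ℂ) (v ξ : V) :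
    𝓕 (fun x ↦ φ (x - v)) ξ = 𝐞 (-⟪v, ξ⟫_ℝ) • 𝓕 φ ξ := by
  have h : 𝓕 (fun x ↦ φ (x + -v)) ξ = 𝐞 ⟪-v, ξ⟫_ℝ • 𝓕 φ ξ :=
    congrFun (VectorFourier.fourierIntegral_comp_add_right 𝐞 volume (innerₗ V) φ (-v)) ξ
  simpa only [inner_neg_left, ← sub_eq_add_neg] using h

lemma integral_conj_fourier_mul_eq {φ f : V → ℂ} (hφ : Integrable φ) (hf : Integrable f) :
    ∫ ξ, conj (𝓕 φ ξ) * f ξ = ∫ x, conj (φ x) * 𝓕⁻ f x := by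
  simpa only [flip_innerₗ, innerSL_apply_apply, RCLike.inner_apply'] using!
    VectorFourier.integral_sesq_fourierIntegral_eq_neg_flip (innerSL ℂ) (L := innerₗ V)
      continuous_fourierChar continuous_inner hφ hf

lemma integral_conj_comp_sub_mul_fourierInv {φ f : V → ℂ} (hφ : Integrable φ)
    (hf : Integrable f) (v : V) :
    ∫ x, conj (φ (x - v)) * 𝓕⁻ f x = 𝓕⁻ (fun ξ ↦ conj (𝓕 φ ξ) * f ξ) v := by
  rw [← integral_conj_fourier_mul_eq (hφ.comp_sub_right v) hf, fourierInv_eq]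
  congr 1 with ξ
  rw [fourier_comp_sub_right, Circle.smul_def, Circle.smul_def, smul_eq_mul, smul_eq_mul, map_mul,
    ← Circle.coe_inv_eq_conj, ← AddChar.map_neg_eq_inv, neg_neg, real_inner_comm, mul_assoc]

lemma integral_exp_inner_mul_eq_fourierInv (f : V → ℂ) (x : V) :
    ∫ ξ, Complex.exp (2 * π * Complex.I * (⟪x, ξ⟫_ℝ : ℂ)) * f ξ = 𝓕⁻ f x := by
  simp only [fourierInv_eq', real_inner_comm x, smul_eq_mul]
  push_cast
  ring_nf

lemma fourierInv_comp_inv_smul (f : V → ℂ) {h : ℝ} (hh : h ≠ 0) (x : V) :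
    𝓕⁻ (fun ξ ↦ f (h⁻¹ • ξ)) x = |h ^ Module.finrank ℝ V| • 𝓕⁻ f (h • x) := by
  rw [fourierInv_eq, fourierInv_eq, ← Measure.integral_comp_inv_smul]
  congr 1 with ξ
  rw [inner_smul_left, inner_smul_right, RCLike.conj_to_real, inv_mul_cancel_left₀ hh]

lemma integral_comp_inv_smul_mul_fourierInv (ψ f : V → ℂ) {h : ℝ} (hh : h ≠ 0) :
    ∫ x, ψ (h⁻¹ • x) * 𝓕⁻ f x = ∫ y, ψ y * 𝓕⁻ (fun ξ ↦ f (h⁻¹ • ξ)) y := by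
  have hscale := Measure.integral_comp_inv_smul volume (fun y : V ↦ ψ y * 𝓕⁻ f (h • y)) h
  simp only [smul_inv_smul₀ hh, fourierInv_comp_inv_smul f hh, mul_smul_comm, integral_smul]
    at hscale ⊢
  exact hscale

end Fourier

section Sampling

variable {d : ℕ}

lemma InWienerAmalgam.of_norm_le {f g : C(Euc d, ℂ)} (hf : InWienerAmalgam f) {C : ℝ}
    (hC : 0 ≤ C) (hgf : ∀ x, ‖g x‖ ≤ C * ‖f x‖) : InWienerAmalgam g := by
  refine fun K ↦ ((hf K).mul_left C).of_nonneg_of_le (fun n ↦ norm_nonneg _) fun n ↦ ?_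
  rw [ContinuousMap.norm_le _ (by positivity)]
  rintro ⟨x, hx⟩
  exact (hgf _).trans (mul_le_mul_of_nonneg_left (norm_le_norm_restrict_addRight f n hx) hC)

lemma InWienerAmalgam.exists_sum_norm_le {f : C(Euc d, ℂ)} (hf : InWienerAmalgam f) :
    ∃ B, ∀ (s : Finset (Zd d)) (x : Euc d), ∑ n ∈ s, ‖f (x + latVec d n)‖ ≤ B := by
  obtain ⟨K, hK⟩ := exists_compacts_unitCube_subset d
  refine ⟨∑' n : Zd d, ‖(f.comp (.addRight (latVec d n))).restrict K‖, fun s x ↦ ?_⟩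
  obtain ⟨m, hm, -⟩ := existsUnique_sub_latVec_mem_unitCube x
  have hbound (n : Zd d) : ‖f (x + latVec d n)‖ ≤
      ‖(f.comp (.addRight (latVec d (m + n)))).restrict K‖ := by
    have hx : x - latVec d m + latVec d (m + n) = x + latVec d n := by
      rw [latVec_add, ← add_assoc, sub_add_cancel]
    exact hx ▸ norm_le_norm_restrict_addRight f (m + n) (hK hm)
  calc ∑ n ∈ s, ‖f (x + latVec d n)‖
    _ ≤ ∑ n ∈ s, ‖(f.comp (.addRight (latVec d (m + n)))).restrict K‖ :=
      Finset.sum_le_sum fun n _ ↦ hbound n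
    _ ≤ ∑' n, ‖(f.comp (.addRight (latVec d (m + n)))).restrict K‖ :=
      ((hf K).comp_injective (add_right_injective m)).sum_le_tsum s fun n _ ↦ norm_nonneg _
    _ = ∑' n, ‖(f.comp (.addRight (latVec d n))).restrict K‖ :=
      (Equiv.addLeft m).tsum_eq fun n ↦ ‖(f.comp (.addRight (latVec d n))).restrict K‖

lemma InWienerAmalgam.summable_integral_comp_sub_mul {f : C(Euc d, ℂ)} (hf : InWienerAmalgam f)
    {φ : Euc d → ℂ} (hφ : Integrable φ) :
    Summable fun n : Zd d ↦ ∫ x, φ (x - latVec d n) * f x := by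
  obtain ⟨B, hB⟩ := hf.exists_sum_norm_le
  have hshift (n : Zd d) :
      ∫ x, φ (x - latVec d n) * f x = ∫ x, φ x * f (x + latVec d n) := by
    rw [← integral_add_right_eq_self _ (latVec d n)]
    simp only [add_sub_cancel_right]
  have hle (s : Finset (Zd d)) (x : Euc d) :
      ∑ n ∈ s, ‖φ x * f (x + latVec d n)‖ ≤ ‖φ x‖ * B := by
    simp only [norm_mul, ← Finset.mul_sum]
    exact mul_le_mul_of_nonneg_left (hB s x) (norm_nonneg _)
  have hint (n : Zd d) : Integrable fun x ↦ φ x * f (x + latVec d n) :=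
    hφ.mul_bdd (c := B) (by fun_prop) (.of_forall fun x ↦ by simpa using hB {n} x)
  simp only [hshift]
  refine .of_norm (summable_of_sum_le (c := (∫ x, ‖φ x‖) * B) (fun n ↦ norm_nonneg _) fun s ↦ ?_)
  calc ∑ n ∈ s, ‖∫ x, φ x * f (x + latVec d n)‖
    _ ≤ ∑ n ∈ s, ∫ x, ‖φ x * f (x + latVec d n)‖ :=
      Finset.sum_le_sum fun n _ ↦ norm_integral_le_integral_norm _
    _ = ∫ x, ∑ n ∈ s, ‖φ x * f (x + latVec d n)‖ :=
      (integral_finsetSum s fun n _ ↦ (hint n).norm).symm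
    _ ≤ ∫ x, ‖φ x‖ * B :=
      integral_mono (integrable_finsetSum s fun n _ ↦ (hint n).norm) (hφ.norm.mul_const B) (hle s)
    _ = (∫ x, ‖φ x‖) * B := integral_mul_const B _

theorem hasSum_fourierChar_mul_integral_conj_comp_sub {φ : Euc d → ℂ} (hφ : Integrable φ)
    {f F : C(Euc d, ℂ)} (hf : InWienerAmalgam f) (hF : InWienerAmalgam F) (hFf : ⇑F = 𝓕⁻ ⇑f)
    (ζ : Euc d) :
    HasSum (fun z : Zd d ↦ (𝐞 (-⟪latVec d z, ζ⟫_ℝ) : ℂ) *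
        ∫ x, conj (φ (x - latVec d z)) * 𝓕⁻ ⇑f x)
      (∑' n : Zd d, conj (𝓕 φ (ζ + latVec d n)) * f (ζ + latVec d n)) := by
  let g : C(Euc d, ℂ) := ⟨fun ξ ↦ conj (𝓕 φ ξ) * f ξ,
    (continuous_conj.comp (continuous_fourier hφ)).mul f.continuous⟩
  have hg : InWienerAmalgam g := hf.of_norm_le (C := ∫ x, ‖φ x‖) (by positivity) fun ξ ↦ by
    simp only [g, ContinuousMap.coe_mk, norm_mul, RCLike.norm_conj]
    gcongr
    exact norm_fourier_le_integral_norm φ ξ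
  have hsample (z : Zd d) :
      𝓕 ⇑g (latVec d (-z)) = ∫ x, conj (φ (x - latVec d z)) * 𝓕⁻ ⇑f x := by
    rw [latVec_neg, ← fourierInv_eq_fourier_neg]
    exact (integral_conj_comp_sub_mul_fourierInv hφ hf.integrable _).symm
  have hφconj : Integrable fun x ↦ conj (φ x) := conjCLE.integrable_comp_iff.2 hφ
  have hsamples : Summable fun z : Zd d ↦ ∫ x, conj (φ (x - latVec d z)) * 𝓕⁻ ⇑f x := by
    simpa only [hFf] using hF.summable_integral_comp_sub_mul hφconj
  have hcoeffs : Summable fun m : Zd d ↦ 𝓕 ⇑g (latVec d m) :=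
    (Equiv.neg (Zd d)).summable_iff.1 (hsamples.congr fun z ↦ (hsample z).symm)
  have hpoisson := (Equiv.neg (Zd d)).hasSum_iff.2 (hg.hasSum_fourier_latVec hcoeffs ζ)
  refine hpoisson.congr_fun fun z ↦ ?_
  simp only [Function.comp_apply, Equiv.neg_apply, hsample]
  rw [latVec_neg, inner_neg_right, real_inner_comm, mul_comm]

end Sampling

theorem discrete_fourier_of_projection_general
    {d : ℕ} {φ f : Euc d → ℂ} (hφ : Integrable φ) (hf : Continuous f) {b : ℝ} (hb : d < b)
    (hfb : f =O[cocompact (Euc d)] (‖·‖ ^ (-b))) (hFfb : 𝓕⁻ f =O[cocompact (Euc d)] (‖·‖ ^ (-b)))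
    {h : ℝ} (hh : h ≠ 0) (ζ : Euc d) :
    (h ^ d : ℂ) * ∑' z : Zd d,
        Complex.exp (-2 * π * Complex.I * (⟪latPt d h z, ζ⟫_ℝ : ℂ)) *
          ((h ^ d : ℂ)⁻¹ * ∫ x, conj (φ (h⁻¹ • (x - latPt d h z))) *
            ∫ ξ, Complex.exp (2 * π * Complex.I * (⟪x, ξ⟫_ℝ : ℂ)) * f ξ)
    = ∑' n : Zd d, conj (𝓕 φ (h • ζ + latVec d n)) * f (ζ + h⁻¹ • latVec d n) := by
  let fh : C(Euc d, ℂ) := ⟨fun ξ ↦ f (h⁻¹ • ξ), by fun_prop⟩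
  have hfh : InWienerAmalgam fh :=
    inWienerAmalgam_of_isBigO hb (isBigO_comp_smul_rpow hfb (inv_ne_zero hh))
  let Fh : C(Euc d, ℂ) := ⟨𝓕⁻ ⇑fh, continuous_fourierInv hfh.integrable⟩
  have hFh : InWienerAmalgam Fh := by
    have hFh_eq : ⇑Fh = fun x ↦ |h ^ Module.finrank ℝ (Euc d)| • 𝓕⁻ f (h • x) :=
      funext (fourierInv_comp_inv_smul f hh)
    refine inWienerAmalgam_of_isBigO hb ?_
    rw [hFh_eq]
    exact (isBigO_comp_smul_rpow hFfb hh).const_smul_left |h ^ Module.finrank ℝ (Euc d)|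
  have hsum := hasSum_fourierChar_mul_integral_conj_comp_sub hφ hfh hFh rfl (h • ζ)
  have hscale (z : Zd d) : ∫ x, conj (φ (h⁻¹ • (x - latPt d h z))) * 𝓕⁻ f x =
      ∫ x, conj (φ (x - latVec d z)) * 𝓕⁻ ⇑fh x := by
    simp only [latPt_eq_smul_latVec, smul_sub, inv_smul_smul₀ hh]
    exact integral_comp_inv_smul_mul_fourierInv (fun x ↦ conj (φ (x - latVec d z))) f hh
  have hchar (z : Zd d) : Complex.exp (-2 * π * Complex.I * (⟪latPt d h z, ζ⟫_ℝ : ℂ)) =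
      𝐞 (-⟪latVec d z, h • ζ⟫_ℝ) := by
    rw [fourierChar_apply, latPt_eq_smul_latVec, real_inner_smul_left, real_inner_smul_right]
    push_cast
    ring_nf
  simp only [integral_exp_inner_mul_eq_fourierInv, hscale, hchar,
    mul_left_comm _ ((h ^ d : ℂ)⁻¹), tsum_mul_left]
  rw [inv_mul_cancel_left₀ (by exact_mod_cast pow_ne_zero d hh), hsum.tsum_eq]
  simp only [fh, ContinuousMap.coe_mk, smul_add, inv_smul_smul₀ hh]

end

/-- For `φ ∈ 𝒮(ℝ^d)`, `h > 0`, `f ∈ 𝒮(ℝ^d)` and `ζ ∈ h⁻¹𝕋^d`,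
`Q_h f(ζ) = ∑_{n∈ℤ^d} conj(φ̂(hζ+n)) f(ζ + h⁻¹n)` where `Q_h = F_h P_h 𝓕*`; concretely,
`h^d ∑_{z∈hℤ^d} e^{−2πi z·ζ} (h^{−d} ∫ conj(φ(h⁻¹(x−z))) (∫ e^{2πi x·ξ} f(ξ) dξ) dx)
  = ∑_{n∈ℤ^d} conj(φ̂(hζ+n)) f(ζ+h⁻¹n)`. -/
theorem discrete_fourier_of_projection
    (d : ℕ) (φ f : SchwartzMap (Euc d) ℂ) (h : ℝ) (hh : 0 < h) (ζ : Euc d) :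
    (h ^ d : ℂ) * ∑' z : Zd d,
        Complex.exp (-2 * π * Complex.I * (⟪latPt d h z, ζ⟫_ℝ : ℂ)) *
          ((h ^ d : ℂ)⁻¹ * ∫ x, conj (φ (h⁻¹ • (x - latPt d h z))) *
            ∫ ξ, Complex.exp (2 * π * Complex.I * (⟪x, ξ⟫_ℝ : ℂ)) * f ξ)
    = ∑' n : Zd d, conj (𝓕 ⇑φ (h • ζ + latVec d n)) * f (ζ + h⁻¹ • latVec d n) :=
  discrete_fourier_of_projection_general φ.integrable f.continuous (lt_add_one _)
    (f.isBigO_cocompact_rpow _) (SchwartzMap.fourierInv_coe f ▸ (𝓕⁻ f).isBigO_cocompact_rpow _)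
    hh.ne' ζ
end
end

section
/- Let V : ℝ^d → ℝ be continuous with V ≥ 1, such that V⁻¹ is uniformly continuous and there is c₁ > 0 with c₁⁻¹ V(x) ≤ V(y) ≤ c₁ V(x) whenever |x−y| ≤ 1. Then V is relatively bounded with respect to −Δ + V on C_c^∞(ℝ^d): there is C > 0 such that for all u ∈ C_c^∞(ℝ^d), ‖V u‖_{L²(ℝ^d)} ≤ C ( ‖(−Δ + V) u‖_{L²(ℝ^d)} + ‖u‖_{L²(ℝ^d)} ). -/
open MeasureTheory Complex Real
open scoped ENNReal

noncomputable section

/-- The Laplacian `Δu(x) = ∑_j ∂²u/∂x_j²(x)` of a function on `ℝ^d`. -/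
def lapl (d : ℕ) (u : Euc d → ℂ) (x : Euc d) : ℂ :=
  ∑ j : Fin d, fderiv ℝ (fun y => fderiv ℝ u y (EuclideanSpace.single j (1 : ℝ))) x
      (EuclideanSpace.single j (1 : ℝ))

/-!
Write `S = -Δ + V`. Mollifying `V` at the scale on which it is slowly varying gives a `C²` function
`W` with `V ≤ W ≤ A V` and `ΔW ≤ K V`, the derivatives falling on the mollifier. Pairing `S u`
with `W u` and using `2 ⟨u, Δu⟩ ≤ Δ|u|²` gives
`2 |V u|² ≤ 2 A |V u| |S u| + W Δ|u|²` pointwise, without differentiating `V`. On integrating, two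
integrations by parts turn the last term into `∫ ΔW |u|² ≤ K ∫ |V u| |u|`, so that by
Cauchy–Schwarz every term carries a factor `‖V u‖`; dividing by it yields
`‖V u‖ ≤ A ‖S u‖ + (K / 2) ‖u‖`.
-/

open InnerProductSpace Laplacian
open scoped Convolution NNReal

section Laplacian

variable {E F : Type*} [NormedAddCommGroup E] [InnerProductSpace ℝ E] [FiniteDimensional ℝ E]
  [NormedAddCommGroup F] [NormedSpace ℝ F]

theorem contDiff_one_fderiv_apply {E F : Type*} [NormedAddCommGroup E] [NormedSpace ℝ E]
    [NormedAddCommGroup F] [NormedSpace ℝ F] {f : E → F} (hf : ContDiff ℝ 2 f) (v : E) :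
    ContDiff ℝ 1 (fun y => fderiv ℝ f y v) :=
  (hf.fderiv_right (m := 1) (by norm_num)).clm_apply contDiff_const

theorem laplacian_eq_sum_fderiv_fderiv {ι : Type*} [Fintype ι] (b : OrthonormalBasis ι ℝ E)
    {f : E → F} (hf : ContDiff ℝ 2 f) (x : E) :
    Δ f x = ∑ i, fderiv ℝ (fun y => fderiv ℝ f y (b i)) x (b i) := by
  have hf' : DifferentiableAt ℝ (fderiv ℝ f) x :=
    (hf.fderiv_right (m := 1) (by norm_num)).differentiable (by simp) x
  rw [laplacian_eq_iteratedFDeriv_orthonormalBasis f b]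
  refine Finset.sum_congr rfl fun i _ => ?_
  rw [iteratedFDeriv_two_apply, fderiv_clm_apply hf' (differentiableAt_const _)]
  simp

theorem continuous_laplacian {f : E → F} (hf : ContDiff ℝ 2 f) : Continuous (Δ f) := by
  rw [laplacian_eq_iteratedFDeriv_stdOrthonormalBasis]
  have := hf.continuous_iteratedFDeriv'
  fun_prop

theorem tsupport_laplacian_subset (f : E → F) : tsupport (Δ f) ⊆ tsupport f := by
  refine closure_minimal (fun x hx => ?_) (isClosed_tsupport f)
  refine support_iteratedFDeriv_subset (𝕜 := ℝ) 2 fun h => hx ?_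
  simp [laplacian_eq_iteratedFDeriv_stdOrthonormalBasis, h]

theorem hasCompactSupport_laplacian {f : E → F} (hf : HasCompactSupport f) :
    HasCompactSupport (Δ f) :=
  hf.of_isClosed_subset (isClosed_tsupport _) (tsupport_laplacian_subset f)

theorem hasCompactSupport_norm_sq {X F : Type*} [TopologicalSpace X] [NormedAddCommGroup F]
    {u : X → F} (hu : HasCompactSupport u) : HasCompactSupport fun x => ‖u x‖ ^ 2 :=
  hu.comp_left (g := fun z => ‖z‖ ^ 2) (by simp)

theorem fderiv_fderiv_norm_sq {E F : Type*} [NormedAddCommGroup E] [NormedSpace ℝ E]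
    [NormedAddCommGroup F] [InnerProductSpace ℝ F] {u : E → F} (hu : ContDiff ℝ 2 u) (x v : E) :
    fderiv ℝ (fun y => fderiv ℝ (fun z => ‖u z‖ ^ 2) y v) x v =
      2 * inner ℝ (u x) (fderiv ℝ (fun y => fderiv ℝ u y v) x v) +
        2 * ‖fderiv ℝ u x v‖ ^ 2 := by
  have hd : Differentiable ℝ u := hu.differentiable (by simp)
  have hd' := (contDiff_one_fderiv_apply hu v).differentiable (by simp)
  have first : (fun y => fderiv ℝ (fun z => ‖u z‖ ^ 2) y v) =
      fun y => 2 * inner ℝ (u y) (fderiv ℝ u y v) := by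
    funext y
    rw [(hd y).hasFDerivAt.norm_sq.fderiv]
    simp
  rw [first, fderiv_const_mul ((hd x).inner ℝ (hd' x))]
  simp only [smul_apply, smul_eq_mul, fderiv_inner_apply ℝ (hd x) (hd' x),
    real_inner_self_eq_norm_sq]
  ring

theorem two_mul_inner_laplacian_le {F : Type*} [NormedAddCommGroup F] [InnerProductSpace ℝ F]
    {u : E → F} (hu : ContDiff ℝ 2 u) (x : E) :
    2 * inner ℝ (u x) (Δ u x) ≤ Δ (fun y => ‖u y‖ ^ 2) x := by
  let b := stdOrthonormalBasis ℝ E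
  rw [laplacian_eq_sum_fderiv_fderiv b hu, laplacian_eq_sum_fderiv_fderiv b (hu.norm_sq ℝ),
    inner_sum, Finset.mul_sum]
  refine Finset.sum_le_sum fun i _ => ?_
  rw [fderiv_fderiv_norm_sq hu]
  exact le_add_of_nonneg_right (by positivity)

end Laplacian

section IntegrationByParts

variable {E F : Type*} [NormedAddCommGroup E] [MeasurableSpace E] [BorelSpace E]
  [NormedAddCommGroup F] [NormedSpace ℝ F]

theorem integral_smul_fderiv_eq_neg_fderiv_smul [NormedSpace ℝ E] [FiniteDimensional ℝ E]
    {μ : Measure E} [μ.IsAddHaarMeasure] {f : E → ℝ} {g : E → F}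
    (hf : ContDiff ℝ 1 f) (hg : ContDiff ℝ 1 g) (hgc : HasCompactSupport g) (v : E) :
    ∫ x, f x • fderiv ℝ g x v ∂μ = -∫ x, fderiv ℝ f x v • g x ∂μ := by
  have hf' : Continuous fun x => fderiv ℝ f x v :=
    (hf.continuous_fderiv (by simp)).clm_apply continuous_const
  have hg' : Continuous fun x => fderiv ℝ g x v :=
    (hg.continuous_fderiv (by simp)).clm_apply continuous_const
  exact integral_smul_fderiv_eq_neg_fderiv_smul_of_integrable
    ((hf'.smul hg.continuous).integrable_of_hasCompactSupport hgc.smul_left)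
    ((hf.continuous.smul hg').integrable_of_hasCompactSupport
      (hgc.fderiv_apply ℝ v).smul_left)
    ((hf.continuous.smul hg.continuous).integrable_of_hasCompactSupport hgc.smul_left)
    (fun x _ => hf.differentiable (by simp) x) (fun x _ => hg.differentiable (by simp) x)

theorem integral_smul_laplacian [InnerProductSpace ℝ E] [FiniteDimensional ℝ E]
    {μ : Measure E} [μ.IsAddHaarMeasure] {f : E → ℝ} {g : E → F}
    (hf : ContDiff ℝ 2 f) (hg : ContDiff ℝ 2 g) (hgc : HasCompactSupport g) :
    ∫ x, f x • Δ g x ∂μ = ∫ x, Δ f x • g x ∂μ := by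
  let b := stdOrthonormalBasis ℝ E
  have hf₁ : ContDiff ℝ 1 f := hf.of_le (by norm_num)
  have hg₁ : ContDiff ℝ 1 g := hg.of_le (by norm_num)
  have hf' i := contDiff_one_fderiv_apply hf (b i)
  have hg' i := contDiff_one_fderiv_apply hg (b i)
  have hf'' i : Continuous fun x => fderiv ℝ (fun y => fderiv ℝ f y (b i)) x (b i) :=
    ((hf' i).continuous_fderiv (by simp)).clm_apply continuous_const
  have hg'' i : Continuous fun x => fderiv ℝ (fun y => fderiv ℝ g y (b i)) x (b i) :=
    ((hg' i).continuous_fderiv (by simp)).clm_apply continuous_const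
  have hgc' i := hgc.fderiv_apply ℝ (b i)
  simp only [laplacian_eq_sum_fderiv_fderiv b hf, laplacian_eq_sum_fderiv_fderiv b hg,
    Finset.smul_sum, Finset.sum_smul]
  rw [integral_finsetSum, integral_finsetSum]
  · refine Finset.sum_congr rfl fun i _ => ?_
    rw [integral_smul_fderiv_eq_neg_fderiv_smul hf₁ (hg' i) (hgc' i),
      integral_smul_fderiv_eq_neg_fderiv_smul (hf' i) hg₁ hgc, neg_neg]
  · exact fun i _ => ((hf'' i).smul hg.continuous).integrable_of_hasCompactSupport hgc.smul_left
  · exact fun i _ => (hf.continuous.smul (hg'' i)).integrable_of_hasCompactSupport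
      ((hgc' i).fderiv_apply ℝ (b i)).smul_left

end IntegrationByParts

section Convolution

variable {E F G H : Type*} [NormedAddCommGroup E] [MeasurableSpace E] [BorelSpace E]
  [NormedAddCommGroup F] [NormedSpace ℝ F] [NormedAddCommGroup G] [NormedSpace ℝ G]
  [NormedAddCommGroup H] [NormedSpace ℝ H] (L : F →L[ℝ] G →L[ℝ] H)

theorem fderiv_convolution_left_apply [NormedSpace ℝ E] [FiniteDimensional ℝ E] {μ : Measure E}
    [μ.IsAddHaarMeasure] {f : E → F} {g : E → G} (hf : ContDiff ℝ 1 f)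
    (hfc : HasCompactSupport f) (hg : LocallyIntegrable g μ) (x v : E) :
    fderiv ℝ (f ⋆[L, μ] g) x v = ((fun y => fderiv ℝ f y v) ⋆[L, μ] g) x := by
  have hint := (hfc.fderiv (𝕜 := ℝ)).convolutionExists_left (L.precompL E)
    (hf.continuous_fderiv (by simp)) hg x
  rw [(hfc.hasFDerivAt_convolution_left L hf hg x).fderiv]
  simp_rw [convolution_def, ContinuousLinearMap.integral_apply hint]
  rfl

theorem laplacian_convolution_left [InnerProductSpace ℝ E] [FiniteDimensional ℝ E] {μ : Measure E}
    [μ.IsAddHaarMeasure] {f : E → F} {g : E → G} (hf : ContDiff ℝ 2 f)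
    (hfc : HasCompactSupport f) (hg : LocallyIntegrable g μ) :
    Δ (f ⋆[L, μ] g) = Δ f ⋆[L, μ] g := by
  let b := stdOrthonormalBasis ℝ E
  have hf' i := contDiff_one_fderiv_apply hf (b i)
  have hfc' i := hfc.fderiv_apply ℝ (b i)
  ext x
  have first i : (fun y => fderiv ℝ (f ⋆[L, μ] g) y (b i)) =
      (fun y => fderiv ℝ f y (b i)) ⋆[L, μ] g :=
    funext fun y => fderiv_convolution_left_apply L (hf.of_le (by norm_num)) hfc hg y (b i)
  have hint i : Integrable
      (fun t => L (fderiv ℝ (fun y => fderiv ℝ f y (b i)) t (b i)) (g (x - t))) μ :=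
    ((hfc' i).fderiv_apply ℝ (b i)).convolutionExists_left L
      (((hf' i).continuous_fderiv (by simp)).clm_apply continuous_const) hg x
  have hfg : ContDiff ℝ 2 (f ⋆[L, μ] g) := hfc.contDiff_convolution_left L (n := 2) hf hg
  rw [laplacian_eq_sum_fderiv_fderiv b hfg]
  simp only [first, fderiv_convolution_left_apply L (hf' _) (hfc' _) hg, convolution_def,
    laplacian_eq_sum_fderiv_fderiv b hf, map_sum, sum_apply]
  exact (integral_finsetSum _ fun i _ => hint i).symm

end Convolution

/-- A function is slowly varying if its values at any two points within some fixed distance of each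
other are comparable up to a fixed factor. Only the upper bound is recorded, because exchanging
the two points gives the lower one. -/
def IsSlowlyVarying {X : Type*} [PseudoMetricSpace X] (V : X → ℝ) : Prop :=
  ∃ r > 0, ∃ c > 0, ∀ x y, dist x y ≤ r → V y ≤ c * V x

section Mollification

variable {E : Type*} [NormedAddCommGroup E] [MeasurableSpace E] {μ : Measure E}

theorem IsSlowlyVarying.locallyIntegrable {X : Type*} [PseudoMetricSpace X] [MeasurableSpace X]
    [OpensMeasurableSpace X] {ν : Measure X} [IsLocallyFiniteMeasure ν] {V : X → ℝ}
    (hV : IsSlowlyVarying V) (hVm : AEStronglyMeasurable V ν) (hV0 : ∀ x, 0 ≤ V x) :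
    LocallyIntegrable V ν := by
  obtain ⟨r, hr, c, -, hVc⟩ := hV
  intro x
  have hbound : ∀ᶠ y in nhds x, ‖V y‖ ≤ c * V x := by
    filter_upwards [Metric.closedBall_mem_nhds x hr] with y hy
    rw [Real.norm_of_nonneg (hV0 y)]
    exact hVc x y (by rwa [dist_comm])
  exact (ν.finiteAt_nhds x).integrableAtFilter hVm.stronglyMeasurableAtFilter
    (Filter.isBoundedUnder_of_eventually_le hbound)

theorem abs_convolution_le_of_tsupport_subset_closedBall {φ V : E → ℝ} {r c : ℝ}
    (hφ : Integrable φ μ) (hφr : tsupport φ ⊆ Metric.closedBall 0 r) (hV0 : ∀ x, 0 ≤ V x)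
    (hVc : ∀ x y, dist x y ≤ r → V y ≤ c * V x) (x : E) :
    |(φ ⋆[ContinuousLinearMap.lsmul ℝ ℝ, μ] V) x| ≤ (∫ t, |φ t| ∂μ) * (c * V x) := by
  rw [← integral_mul_const, ← Real.norm_eq_abs]
  refine norm_integral_le_of_norm_le (hφ.abs.mul_const _) (.of_forall fun t => ?_)
  by_cases ht : φ t = 0
  · simp [ht]
  have hxt : dist x (x - t) ≤ r := by simpa using hφr (subset_tsupport φ ht)
  simp only [ContinuousLinearMap.lsmul_apply, norm_smul, Real.norm_eq_abs, abs_of_nonneg (hV0 _)]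
  gcongr
  exact hVc _ _ hxt

theorem le_mul_convolution_of_tsupport_subset_closedBall {φ V : E → ℝ} {r c : ℝ}
    (hφ : Integrable φ μ) (hφ0 : ∀ t, 0 ≤ φ t) (hφ1 : ∫ t, φ t ∂μ = 1)
    (hφr : tsupport φ ⊆ Metric.closedBall 0 r)
    (hφV : ConvolutionExists φ V (ContinuousLinearMap.lsmul ℝ ℝ) μ)
    (hVc : ∀ x y, dist x y ≤ r → V y ≤ c * V x) (x : E) :
    V x ≤ c * (φ ⋆[ContinuousLinearMap.lsmul ℝ ℝ, μ] V) x := by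
  calc V x = ∫ t, φ t * V x ∂μ := by rw [integral_mul_const, hφ1, one_mul]
    _ ≤ ∫ t, c * (φ t * V (x - t)) ∂μ := by
      refine integral_mono (hφ.mul_const _) ((hφV x).const_mul c) fun t => ?_
      by_cases ht : φ t = 0
      · simp [ht]
      have hxt : dist (x - t) x ≤ r := by simpa using hφr (subset_tsupport φ ht)
      simpa only [mul_left_comm] using mul_le_mul_of_nonneg_left (hVc _ _ hxt) (hφ0 t)
    _ = c * (φ ⋆[ContinuousLinearMap.lsmul ℝ ℝ, μ] V) x := integral_const_mul _ _

theorem exists_contDiff_mollifier [NormedSpace ℝ E] [FiniteDimensional ℝ E] [BorelSpace E]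
    [IsLocallyFiniteMeasure μ] [μ.IsOpenPosMeasure] {r : ℝ} (hr : 0 < r) :
    ∃ φ : E → ℝ, ContDiff ℝ (⊤ : ℕ∞) φ ∧ HasCompactSupport φ ∧
      tsupport φ ⊆ Metric.closedBall 0 r ∧ (∀ t, 0 ≤ φ t) ∧ ∫ t, φ t ∂μ = 1 := by
  let b : ContDiffBump (0 : E) := ⟨r / 2, r, by positivity, by linarith⟩
  exact ⟨b.normed μ, b.contDiff_normed, b.hasCompactSupport_normed, b.tsupport_normed_eq.subset,
    b.nonneg_normed, b.integral_normed⟩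

theorem IsSlowlyVarying.exists_contDiff_majorant [InnerProductSpace ℝ E] [FiniteDimensional ℝ E]
    [BorelSpace E] [μ.IsAddHaarMeasure] {V : E → ℝ} (hV : IsSlowlyVarying V)
    (hVm : AEStronglyMeasurable V μ) (hV0 : ∀ x, 0 ≤ V x) :
    ∃ (W : E → ℝ) (A K : ℝ≥0), ContDiff ℝ 2 W ∧ (∀ x, V x ≤ W x) ∧ (∀ x, W x ≤ A * V x) ∧
      ∀ x, Δ W x ≤ K * V x := by
  have hVi : LocallyIntegrable V μ := hV.locallyIntegrable hVm hV0
  obtain ⟨r, hr, c, hc, hVc⟩ := hV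
  obtain ⟨φ, hφ_smooth, hφc, hφr, hφ0, hφ1⟩ := exists_contDiff_mollifier (E := E) (μ := μ) hr
  have hφ : ContDiff ℝ 2 φ := contDiff_infty.1 hφ_smooth 2
  have hφi : Integrable φ μ := hφ.continuous.integrable_of_hasCompactSupport hφc
  have hΔφi : Integrable (Δ φ) μ :=
    (continuous_laplacian hφ).integrable_of_hasCompactSupport (hasCompactSupport_laplacian hφc)
  let L := ContinuousLinearMap.lsmul ℝ ℝ (E := ℝ)
  have hφV : ContDiff ℝ 2 (φ ⋆[L, μ] V) := hφc.contDiff_convolution_left L (n := 2) hφ hVi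
  refine ⟨c • (φ ⋆[L, μ] V), ⟨c * c, by positivity⟩, ⟨c * ((∫ t, |Δ φ t| ∂μ) * c), by positivity⟩,
    hφV.const_smul c, ?_, fun x => ?_, fun x => ?_⟩
  · exact le_mul_convolution_of_tsupport_subset_closedBall hφi hφ0 hφ1 hφr
      (hφc.convolutionExists_left L hφ.continuous hVi) hVc
  · have hle := abs_convolution_le_of_tsupport_subset_closedBall hφi hφr hV0 hVc x
    simp only [abs_of_nonneg (hφ0 _), hφ1, one_mul] at hle
    calc c * (φ ⋆[L, μ] V) x ≤ c * (c * V x) := by gcongr; exact (le_abs_self _).trans hle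
      _ = c * c * V x := by ring
  · have hle := abs_convolution_le_of_tsupport_subset_closedBall hΔφi
      ((tsupport_laplacian_subset φ).trans hφr) hV0 hVc x
    rw [laplacian_smul c hφV.contDiffAt, laplacian_convolution_left L hφ hφc hVi]
    calc c * (Δ φ ⋆[L, μ] V) x ≤ c * ((∫ t, |Δ φ t| ∂μ) * (c * V x)) := by
          gcongr; exact (le_abs_self _).trans hle
      _ = c * ((∫ t, |Δ φ t| ∂μ) * c) * V x := by ring

end Mollification

section LpNorm

variable {α F G : Type*} [MeasurableSpace α] {μ : Measure α} [NormedAddCommGroup F]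
  [NormedAddCommGroup G] {f : α → F} {g : α → G}

theorem integral_norm_sq_eq_lpNorm_sq (hf : AEStronglyMeasurable f μ) :
    ∫ x, ‖f x‖ ^ 2 ∂μ = lpNorm f 2 μ ^ 2 := by
  have h0 : 0 ≤ ∫ x, ‖f x‖ ^ 2 ∂μ := integral_nonneg fun x => by positivity
  rw [lpNorm_eq_integral_norm_rpow_toReal (by simp) (by simp) hf]
  simp [← Real.sqrt_eq_rpow, ← one_div, Real.sq_sqrt h0]

theorem integral_norm_mul_norm_le_lpNorm_mul_lpNorm (hf : MemLp f 2 μ) (hg : MemLp g 2 μ) :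
    ∫ x, ‖f x‖ * ‖g x‖ ∂μ ≤ lpNorm f 2 μ * lpNorm g 2 μ := by
  have := integral_mul_norm_le_Lp_mul_Lq (p := 2) (q := 2) .two_two
    (f := fun x => ‖f x‖) (g := fun x => ‖g x‖) (by simpa using hf.norm) (by simpa using hg.norm)
  simpa [lpNorm_eq_integral_norm_rpow_toReal, hf.1, hg.1] using this

theorem memLp_smul_of_abs_le {X : Type*} [TopologicalSpace X] [MeasurableSpace X]
    [OpensMeasurableSpace X] {ν : Measure X} [IsFiniteMeasureOnCompacts ν] [NormedSpace ℝ F]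
    {V W : X → ℝ} {u : X → F} {p : ℝ≥0∞} (hVm : AEStronglyMeasurable V ν) (hW : Continuous W)
    (hVW : ∀ x, |V x| ≤ W x) (hu : Continuous u) (huc : HasCompactSupport u) :
    MemLp (fun x => V x • u x) p ν := by
  have hum : AEStronglyMeasurable u ν := (hu.memLp_of_hasCompactSupport (p := p) huc).1
  have hWu : MemLp (fun x => W x • u x) p ν :=
    (hW.smul hu).memLp_of_hasCompactSupport huc.smul_left
  refine hWu.of_le (hVm.smul hum) (.of_forall fun x => ?_)
  rw [norm_smul, norm_smul]
  gcongr
  exact (hVW x).trans (le_abs_self _)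

end LpNorm

section Schrodinger

variable {E F : Type*} [NormedAddCommGroup E] [InnerProductSpace ℝ E] [FiniteDimensional ℝ E]
  [NormedAddCommGroup F]

/-- The Schrödinger operator `-Δ + V` with a real potential `V`, acting on functions of class `C²`;
elsewhere Mathlib's `Δ` may take junk values. -/
def schrodinger [NormedSpace ℝ F] (V : E → ℝ) (u : E → F) : E → F := fun x => -Δ u x + V x • u x

theorem memLp_schrodinger [NormedSpace ℝ F] [MeasurableSpace E] [BorelSpace E]
    {μ : Measure E} [IsFiniteMeasureOnCompacts μ] {p : ℝ≥0∞} {V : E → ℝ} {u : E → F}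
    (hu : ContDiff ℝ 2 u) (huc : HasCompactSupport u) (hVu : MemLp (fun x => V x • u x) p μ) :
    MemLp (schrodinger V u) p μ :=
  ((continuous_laplacian hu).memLp_of_hasCompactSupport
    (hasCompactSupport_laplacian huc)).neg.add hVu

variable [InnerProductSpace ℝ F] {V W : E → ℝ} {u : E → F} {A K : ℝ≥0}

theorem two_mul_norm_smul_sq_le (hu : ContDiff ℝ 2 u) {x : E} (hV0 : 0 ≤ V x)
    (hVW : V x ≤ W x) (hWV : W x ≤ A * V x) :
    2 * ‖V x • u x‖ ^ 2 ≤ 2 * A * (‖V x • u x‖ * ‖schrodinger V u x‖) +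
      W x * Δ (fun y => ‖u y‖ ^ 2) x := by
  have hW0 : 0 ≤ W x := hV0.trans hVW
  have hinner : V x * ‖u x‖ ^ 2 = inner ℝ (u x) (schrodinger V u x) + inner ℝ (u x) (Δ u x) := by
    simp [schrodinger, inner_add_right, inner_neg_right, real_inner_smul_right]
  have henergy : 2 * (V x * ‖u x‖ ^ 2) ≤
      2 * (‖u x‖ * ‖schrodinger V u x‖) + Δ (fun y => ‖u y‖ ^ 2) x := by
    linarith [two_mul_inner_laplacian_le hu x, real_inner_le_norm (u x) (schrodinger V u x)]
  rw [norm_smul, Real.norm_of_nonneg hV0]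
  calc 2 * (V x * ‖u x‖) ^ 2 = V x * (2 * (V x * ‖u x‖ ^ 2)) := by ring
    _ ≤ W x * (2 * (V x * ‖u x‖ ^ 2)) := by gcongr
    _ ≤ W x * (2 * (‖u x‖ * ‖schrodinger V u x‖) + Δ (fun y => ‖u y‖ ^ 2) x) := by gcongr
    _ = 2 * W x * (‖u x‖ * ‖schrodinger V u x‖) + W x * Δ (fun y => ‖u y‖ ^ 2) x := by ring
    _ ≤ 2 * (A * V x) * (‖u x‖ * ‖schrodinger V u x‖) + W x * Δ (fun y => ‖u y‖ ^ 2) x := by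
      gcongr
    _ = _ := by ring

variable [MeasurableSpace E] [BorelSpace E] {μ : Measure E}

theorem integral_mul_laplacian_norm_sq_le [μ.IsAddHaarMeasure] (hV0 : ∀ x, 0 ≤ V x)
    (hW : ContDiff ℝ 2 W) (hΔW : ∀ x, Δ W x ≤ K * V x) (hu : ContDiff ℝ 2 u)
    (huc : HasCompactSupport u) (hVu : MemLp (fun x => V x • u x) 2 μ) :
    ∫ x, W x * Δ (fun y => ‖u y‖ ^ 2) x ∂μ ≤
      K * (lpNorm (fun x => V x • u x) 2 μ * lpNorm u 2 μ) := by
  have hg : ContDiff ℝ 2 fun x => ‖u x‖ ^ 2 := hu.norm_sq ℝ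
  have hgc : HasCompactSupport fun x => ‖u x‖ ^ 2 := hasCompactSupport_norm_sq huc
  have hu₂ : MemLp u 2 μ := hu.continuous.memLp_of_hasCompactSupport huc
  have hΔWg : Integrable (fun x => Δ W x * ‖u x‖ ^ 2) μ :=
    ((continuous_laplacian hW).mul hg.continuous).integrable_of_hasCompactSupport hgc.mul_left
  calc ∫ x, W x * Δ (fun y => ‖u y‖ ^ 2) x ∂μ = ∫ x, Δ W x * ‖u x‖ ^ 2 ∂μ := by
        simpa only [smul_eq_mul] using integral_smul_laplacian (μ := μ) hW hg hgc
    _ ≤ ∫ x, K * (‖V x • u x‖ * ‖u x‖) ∂μ := by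
      refine integral_mono hΔWg ((hVu.norm.integrable_mul hu₂.norm).const_mul _) fun x => ?_
      calc Δ W x * ‖u x‖ ^ 2 ≤ K * V x * ‖u x‖ ^ 2 := by gcongr; exact hΔW x
        _ = K * (‖V x • u x‖ * ‖u x‖) := by
          rw [norm_smul, Real.norm_of_nonneg (hV0 x)]; ring
    _ = K * ∫ x, ‖V x • u x‖ * ‖u x‖ ∂μ := integral_const_mul _ _
    _ ≤ K * (lpNorm (fun x => V x • u x) 2 μ * lpNorm u 2 μ) := by
      gcongr; exact integral_norm_mul_norm_le_lpNorm_mul_lpNorm hVu hu₂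

theorem lpNorm_smul_le_of_majorant [μ.IsAddHaarMeasure] (hV0 : ∀ x, 0 ≤ V x)
    (hW : ContDiff ℝ 2 W) (hVW : ∀ x, V x ≤ W x) (hWV : ∀ x, W x ≤ A * V x)
    (hΔW : ∀ x, Δ W x ≤ K * V x) (hu : ContDiff ℝ 2 u) (huc : HasCompactSupport u)
    (hVu : MemLp (fun x => V x • u x) 2 μ) :
    lpNorm (fun x => V x • u x) 2 μ ≤
      A * lpNorm (schrodinger V u) 2 μ + K / 2 * lpNorm u 2 μ := by
  set N := lpNorm (fun x => V x • u x) 2 μ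
  set S := lpNorm (schrodinger V u) 2 μ
  have hSu : MemLp (schrodinger V u) 2 μ := memLp_schrodinger hu huc hVu
  have hVuSu : Integrable (fun x => ‖V x • u x‖ * ‖schrodinger V u x‖) μ :=
    hVu.norm.integrable_mul hSu.norm
  have hWΔ : Integrable (fun x => W x * Δ (fun y => ‖u y‖ ^ 2) x) μ :=
    (hW.continuous.mul (continuous_laplacian (hu.norm_sq ℝ))).integrable_of_hasCompactSupport
      (hasCompactSupport_laplacian (hasCompactSupport_norm_sq huc)).mul_left
  have hquad : 2 * N ^ 2 ≤ 2 * A * (N * S) + K * (N * lpNorm u 2 μ) := by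
    calc 2 * N ^ 2 = ∫ x, 2 * ‖V x • u x‖ ^ 2 ∂μ := by
          rw [integral_const_mul, integral_norm_sq_eq_lpNorm_sq hVu.1]
      _ ≤ ∫ x, 2 * A * (‖V x • u x‖ * ‖schrodinger V u x‖) +
            W x * Δ (fun y => ‖u y‖ ^ 2) x ∂μ :=
        integral_mono ((hVu.integrable_norm_pow (by simp)).const_mul 2)
          ((hVuSu.const_mul _).add hWΔ)
          fun x => two_mul_norm_smul_sq_le hu (hV0 x) (hVW x) (hWV x)
      _ = 2 * A * ∫ x, ‖V x • u x‖ * ‖schrodinger V u x‖ ∂μ +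
            ∫ x, W x * Δ (fun y => ‖u y‖ ^ 2) x ∂μ := by
        rw [integral_add (hVuSu.const_mul _) hWΔ, integral_const_mul]
      _ ≤ 2 * A * (N * S) + K * (N * lpNorm u 2 μ) := by
        gcongr
        · exact integral_norm_mul_norm_le_lpNorm_mul_lpNorm hVu hSu
        · exact integral_mul_laplacian_norm_sq_le hV0 hW hΔW hu huc hVu
  have hS : 0 ≤ S := lpNorm_nonneg
  have hU : 0 ≤ lpNorm u 2 μ := lpNorm_nonneg
  rcases (lpNorm_nonneg : 0 ≤ N).eq_or_lt with hN | hN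
  · calc N = 0 := hN.symm
      _ ≤ A * S + K / 2 * lpNorm u 2 μ := by positivity
  · exact le_of_mul_le_mul_left (by linarith) hN

theorem potential_relatively_bounded_continuum_general [μ.IsAddHaarMeasure]
    (hVm : AEStronglyMeasurable V μ) (hV0 : ∀ x, 0 ≤ V x) (hV : IsSlowlyVarying V) :
    ∃ C > (0 : ℝ), ∀ u : E → F, ContDiff ℝ 2 u → HasCompactSupport u →
      eLpNorm (fun x => V x • u x) 2 μ ≤
        ENNReal.ofReal C * (eLpNorm (schrodinger V u) 2 μ + eLpNorm u 2 μ) := by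
  obtain ⟨W, A, K, hW, hVW, hWV, hΔW⟩ := hV.exists_contDiff_majorant hVm hV0
  refine ⟨A + K + 1, by positivity, fun u hu huc => ?_⟩
  have hVu : MemLp (fun x => V x • u x) 2 μ := memLp_smul_of_abs_le hVm hW.continuous
    (fun x => (abs_of_nonneg (hV0 x)).trans_le (hVW x)) hu.continuous huc
  have hSu : MemLp (schrodinger V u) 2 μ := memLp_schrodinger hu huc hVu
  have hu₂ : MemLp u 2 μ := hu.continuous.memLp_of_hasCompactSupport huc
  rw [← ofReal_lpNorm hVu, ← ofReal_lpNorm hSu, ← ofReal_lpNorm hu₂,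
    ← ENNReal.ofReal_add lpNorm_nonneg lpNorm_nonneg, ← ENNReal.ofReal_mul (by positivity)]
  refine ENNReal.ofReal_le_ofReal ?_
  have hS : 0 ≤ lpNorm (schrodinger V u) 2 μ := lpNorm_nonneg
  have hU : 0 ≤ lpNorm u 2 μ := lpNorm_nonneg
  have hA : (A : ℝ) ≤ A + K + 1 := by linarith [K.coe_nonneg]
  have hK : (K / 2 : ℝ) ≤ A + K + 1 := by linarith [A.coe_nonneg, K.coe_nonneg]
  calc lpNorm (fun x => V x • u x) 2 μ ≤
        A * lpNorm (schrodinger V u) 2 μ + K / 2 * lpNorm u 2 μ :=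
      lpNorm_smul_le_of_majorant hV0 hW hVW hWV hΔW hu huc hVu
    _ ≤ (A + K + 1) * lpNorm (schrodinger V u) 2 μ + (A + K + 1) * lpNorm u 2 μ := by gcongr
    _ = (A + K + 1) * (lpNorm (schrodinger V u) 2 μ + lpNorm u 2 μ) := (mul_add _ _ _).symm

end Schrodinger

theorem lapl_eq_laplacian {d : ℕ} {u : Euc d → ℂ} (hu : ContDiff ℝ 2 u) : lapl d u = Δ u := by
  ext x
  simp [lapl, laplacian_eq_sum_fderiv_fderiv (EuclideanSpace.basisFun (Fin d) ℝ) hu]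

/-- Let `V : ℝ^d → ℝ` be continuous with `V ≥ 1`, with `V⁻¹` uniformly
continuous and `c₁⁻¹ V(x) ≤ V(y) ≤ c₁ V(x)` whenever `|x−y| ≤ 1`.  Then `V` is relatively
bounded with respect to `−Δ + V` on `C_c^∞(ℝ^d)`:  there is `C > 0` such that
`‖V u‖_{L²} ≤ C (‖(−Δ + V)u‖_{L²} + ‖u‖_{L²})` for all `u ∈ C_c^∞(ℝ^d)`. -/
theorem potential_relatively_bounded_continuum
    (d : ℕ) (V : Euc d → ℝ)
    (hVcont : Continuous V) (hV1 : ∀ x, 1 ≤ V x)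
    (hVinv : UniformContinuous fun x => (V x)⁻¹)
    (c₁ : ℝ) (hc₁ : 0 < c₁)
    (hVcomp : ∀ x y : Euc d, dist x y ≤ 1 → c₁⁻¹ * V x ≤ V y ∧ V y ≤ c₁ * V x) :
    ∃ C > (0 : ℝ), ∀ u : Euc d → ℂ, ContDiff ℝ (⊤ : ℕ∞) u → HasCompactSupport u →
      eLpNorm (fun x => (V x : ℂ) * u x) 2 volume ≤
        ENNReal.ofReal C *
          (eLpNorm (fun x => -(lapl d u x) + (V x : ℂ) * u x) 2 volume +
            eLpNorm u 2 volume) := by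
  have hV : IsSlowlyVarying V := ⟨1, one_pos, c₁, hc₁, fun x y hxy => (hVcomp x y hxy).2⟩
  obtain ⟨C, hC, hbound⟩ := potential_relatively_bounded_continuum_general (μ := volume) (F := ℂ)
    hVcont.aestronglyMeasurable (fun x => zero_le_one.trans (hV1 x)) hV
  refine ⟨C, hC, fun u hu huc => ?_⟩
  have hu₂ : ContDiff ℝ 2 u := contDiff_infty.1 hu 2
  simp only [lapl_eq_laplacian hu₂, ← Complex.real_smul]
  exact hbound u hu₂ huc
end
end

section
/- Let V : ℝ^d → ℝ be continuous with V ≥ 1, such that V⁻¹ is uniformly continuous and there is c₁ > 0 with c₁⁻¹ V(x) ≤ V(y) ≤ c₁ V(x) whenever |x−y| ≤ 1. Then V is relatively bounded with respect to H_h uniformly in the mesh size: there is C > 0, independent of h ∈ (0,1], such that for every finitely supported v : hℤ^d → ℂ, ‖V v‖_h ≤ C ( ‖H_h v‖_h + ‖v‖_h ), where (Vv)(z) = V(z)v(z) and H_h = H_{0,h} + V. -/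
open MeasureTheory Complex Real

noncomputable section

/-- The `ℓ²(hℤ^d)`-norm `‖v‖_h = (h^d ∑_z |v(hz)|²)^{1/2}`. -/
def normh (d : ℕ) (h : ℝ) (v : Zd d → ℂ) : ℝ :=
  Real.sqrt (h ^ d * ∑' z : Zd d, ‖v z‖ ^ 2)

/-- The discrete Schrödinger operator `H_h = H_{0,h} + V` acting on functions on `hℤ^d`:
`(H_h v)(hz) = h⁻² ∑_j (2 v(hz) − v(hz+he_j) − v(hz−he_j)) + V(hz) v(hz)`. -/
def discSchrodinger (d : ℕ) (h : ℝ) (V : Euc d → ℝ) (v : Zd d → ℂ) (z : Zd d) : ℂ :=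
  (h ^ 2)⁻¹ * ∑ j : Fin d, (2 * v z - v (z + Pi.single j 1) - v (z - Pi.single j 1))
    + (V (latPt d h z) : ℂ) * v z

/-!
Replace `V` by a comparable but slowly varying weight `W`: the supremum of `V` against unit tents
satisfies `V ≤ W ≤ c V` and `|W x - W y| ≤ c² |x - y| min (W x) (W y)`. Pair `H_h v` with `W v`
in `ℓ²`. The potential contributes `∑ W V |v|² ≥ c⁻¹ ‖W v‖²`. Summation by parts turns the kinetic
part into `h⁻² ∑ ⟪δ(W v), δv⟫`, where the error from differentiating `W` is of order `h⁻² · h²`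
times `∑ W |v|²`, uniformly in `h`. Cauchy–Schwarz and division by `‖W v‖` finish.
-/

open scoped RealInnerProductSpace

section TentEnvelope

variable {X : Type*} [PseudoMetricSpace X] {V : X → ℝ} {c : ℝ}

/-- The supremum of `V` against tent functions of unit radius: a regularization of `V` which is
comparable to `V` and slowly varying as soon as `V` is comparable to itself at unit scale. An
unbounded supremum has the junk value `0`. -/
def tentEnvelope (V : X → ℝ) (x : X) : ℝ :=
  ⨆ y, V y * max 0 (1 - dist x y)

lemma mul_tent_le (hV : ∀ x, 0 ≤ V x) (hVc : ∀ x y, dist x y ≤ 1 → V y ≤ c * V x) (x y : X) :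
    V y * max 0 (1 - dist x y) ≤ c * V x := by
  rcases le_total (dist x y) 1 with hxy | hxy
  · calc V y * max 0 (1 - dist x y) ≤ V y * 1 := by
          gcongr
          · exact hV y
          · exact max_le zero_le_one (sub_le_self 1 dist_nonneg)
      _ = V y := mul_one _
      _ ≤ c * V x := hVc x y hxy
  · rw [max_eq_left (sub_nonpos.2 hxy), mul_zero]
    exact (hV x).trans (hVc x x (by simp))

lemma bddAbove_range_mul_tent (hV : ∀ x, 0 ≤ V x)
    (hVc : ∀ x y, dist x y ≤ 1 → V y ≤ c * V x) (x : X) :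
    BddAbove (Set.range fun y => V y * max 0 (1 - dist x y)) :=
  ⟨c * V x, Set.forall_mem_range.2 (mul_tent_le hV hVc x)⟩

lemma le_tentEnvelope (hV : ∀ x, 0 ≤ V x) (hVc : ∀ x y, dist x y ≤ 1 → V y ≤ c * V x) (x : X) :
    V x ≤ tentEnvelope V x := by
  calc V x = V x * max 0 (1 - dist x x) := by simp
    _ ≤ tentEnvelope V x := le_ciSup (bddAbove_range_mul_tent hV hVc x) x

lemma tentEnvelope_le (hV : ∀ x, 0 ≤ V x) (hVc : ∀ x y, dist x y ≤ 1 → V y ≤ c * V x) (x : X) :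
    tentEnvelope V x ≤ c * V x :=
  have : Nonempty X := ⟨x⟩
  ciSup_le (mul_tent_le hV hVc x)

lemma tentEnvelope_sub_le (hV : ∀ x, 0 ≤ V x) (hVc : ∀ x y, dist x y ≤ 1 → V y ≤ c * V x)
    (x y : X) : tentEnvelope V x - tentEnvelope V y ≤ dist x y * (c * V x) := by
  have : Nonempty X := ⟨x⟩
  have hcx : 0 ≤ c * V x := (hV x).trans (hVc x x (by simp))
  rw [sub_le_iff_le_add]
  refine ciSup_le fun u => ?_
  have hu : V u * max 0 (1 - dist y u) ≤ tentEnvelope V y :=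
    le_ciSup (bddAbove_range_mul_tent hV hVc y) u
  have hu₀ : 0 ≤ V u * max 0 (1 - dist y u) := mul_nonneg (hV u) (le_max_left _ _)
  rcases le_total (dist x u) 1 with hxu | hxu
  · have htent : 1 - dist x u ≤ dist x y + max 0 (1 - dist y u) := by
      linarith [dist_triangle_left y u x, le_max_right 0 (1 - dist y u)]
    calc V u * max 0 (1 - dist x u) = V u * (1 - dist x u) := by
          rw [max_eq_right (sub_nonneg.2 hxu)]
      _ ≤ V u * (dist x y + max 0 (1 - dist y u)) := mul_le_mul_of_nonneg_left htent (hV u)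
      _ = dist x y * V u + V u * max 0 (1 - dist y u) := by ring
      _ ≤ dist x y * (c * V x) + tentEnvelope V y := by
          gcongr
          exact hVc x u hxu
  · rw [max_eq_left (sub_nonpos.2 hxu), mul_zero]
    exact add_nonneg (mul_nonneg dist_nonneg hcx) (hu₀.trans hu)

lemma abs_tentEnvelope_sub_le (hV : ∀ x, 0 ≤ V x) (hc : 0 ≤ c)
    (hVc : ∀ x y, dist x y ≤ 1 → V y ≤ c * V x) {x y : X} (hxy : dist x y ≤ 1) :
    |tentEnvelope V x - tentEnvelope V y|
      ≤ c ^ 2 * dist x y * min (tentEnvelope V x) (tentEnvelope V y) := by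
  have hle : ∀ {a b : X}, dist a b ≤ 1 →
      dist x y * (c * V b) ≤ c ^ 2 * dist x y * tentEnvelope V a := fun {a b} hab =>
    calc dist x y * (c * V b) ≤ dist x y * (c * (c * V a)) := by gcongr; exact hVc a b hab
      _ = c ^ 2 * dist x y * V a := by ring
      _ ≤ c ^ 2 * dist x y * tentEnvelope V a := by gcongr; exact le_tentEnvelope hV hVc a
  have hsub := tentEnvelope_sub_le hV hVc x y
  have hsub' := tentEnvelope_sub_le hV hVc y x
  rw [dist_comm y x] at hsub'
  rw [mul_min_of_nonneg _ _ (by positivity), abs_sub_le_iff]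
  exact ⟨le_min (hsub.trans (hle (by simp))) (hsub.trans (hle (dist_comm x y ▸ hxy))),
    le_min (hsub'.trans (hle hxy)) (hsub'.trans (hle (by simp)))⟩

end TentEnvelope

section SquareSummable

variable {ι E : Type*} [NormedAddCommGroup E]

lemma memℓp_of_finite_support {f : ι → E} (hf : (Function.support f).Finite) (p : ENNReal) :
    Memℓp f p :=
  (memℓp_zero hf).of_exponent_ge zero_le

lemma memℓp_comp_injective {κ : Type*} {σ : κ → ι} (hσ : Function.Injective σ) {f : ι → E}
    {p : ENNReal} (hf : Memℓp f p) : Memℓp (fun k => f (σ k)) p := by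
  rcases p.trichotomy with rfl | rfl | hp
  · exact memℓp_zero (hf.finite_dsupport.preimage hσ.injOn)
  · exact memℓp_infty (hf.bddAbove.mono (Set.range_comp_subset_range σ fun i => ‖f i‖))
  · exact memℓp_gen ((hf.summable hp).comp_injective hσ)

lemma memℓp_two_iff_summable_norm_sq {f : ι → E} : Memℓp f 2 ↔ Summable fun i => ‖f i‖ ^ 2 := by
  simpa using memℓp_gen_iff (E := fun _ => E) (p := 2) (f := f) (by simp)

/-- The `ℓ²` norm of an unbundled function, with the junk value `0` off `ℓ²`. -/
def l2Norm (f : ι → E) : ℝ :=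
  √(∑' i, ‖f i‖ ^ 2)

lemma l2Norm_nonneg (f : ι → E) : 0 ≤ l2Norm f :=
  Real.sqrt_nonneg _

lemma l2Norm_sq (f : ι → E) : l2Norm f ^ 2 = ∑' i, ‖f i‖ ^ 2 :=
  Real.sq_sqrt (tsum_nonneg fun _ => sq_nonneg _)

lemma l2Norm_mono {F : Type*} [NormedAddCommGroup F] {f : ι → E} {g : ι → F} (hg : Memℓp g 2)
    (hfg : ∀ i, ‖f i‖ ≤ ‖g i‖) : l2Norm f ≤ l2Norm g := by
  refine Real.sqrt_le_sqrt (Summable.tsum_le_tsum (fun i => ?_)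
    (memℓp_two_iff_summable_norm_sq.1 (hg.mono' hfg)) (memℓp_two_iff_summable_norm_sq.1 hg))
  gcongr
  exact hfg i

lemma l2Norm_eq_norm {f : ι → E} (hf : Memℓp f 2) :
    l2Norm f = ‖(⟨f, hf⟩ : lp (fun _ : ι => E) 2)‖ := by
  rw [lp.norm_eq_tsum_rpow (by simp), l2Norm, Real.sqrt_eq_rpow]
  simp

variable [InnerProductSpace ℝ E] {f g : ι → E}

lemma summable_inner_of_memℓp (hf : Memℓp f 2) (hg : Memℓp g 2) :
    Summable fun i => ⟪f i, g i⟫ :=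
  lp.summable_inner (𝕜 := ℝ) (⟨f, hf⟩ : lp (fun _ => E) 2) ⟨g, hg⟩

lemma tsum_inner_le_l2Norm_mul_l2Norm (hf : Memℓp f 2) (hg : Memℓp g 2) :
    ∑' i, ⟪f i, g i⟫ ≤ l2Norm f * l2Norm g := by
  rw [l2Norm_eq_norm hf, l2Norm_eq_norm hg]
  exact real_inner_le_norm (⟨f, hf⟩ : lp (fun _ => E) 2) ⟨g, hg⟩

variable {u w : ι → ℝ} {c : ℝ}

lemma memℓp_smul_of_le {p : ENNReal} (hw : ∀ i, 0 ≤ w i) (hwu : ∀ i, w i ≤ c * u i)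
    (huf : Memℓp (fun i => u i • f i) p) : Memℓp (fun i => w i • f i) p := by
  refine (huf.const_smul c).mono' fun i => ?_
  rw [Pi.smul_apply, smul_smul, norm_smul, norm_smul]
  gcongr
  exact abs_le_abs_of_nonneg (hw i) (hwu i)

lemma l2Norm_smul_sq_le (hw : ∀ i, 0 ≤ w i) (hwu : ∀ i, w i ≤ c * u i)
    (huf : Memℓp (fun i => u i • f i) 2) :
    l2Norm (fun i => w i • f i) ^ 2 ≤ c * ∑' i, ⟪w i • f i, u i • f i⟫ := by
  have hwf := memℓp_smul_of_le hw hwu huf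
  rw [l2Norm_sq, ← tsum_mul_left]
  refine Summable.tsum_le_tsum (fun i => ?_) (memℓp_two_iff_summable_norm_sq.1 hwf)
    ((summable_inner_of_memℓp hwf huf).mul_left c)
  calc ‖w i • f i‖ ^ 2 = w i * ‖f i‖ ^ 2 * w i := by
        rw [norm_smul, mul_pow, Real.norm_eq_abs, sq_abs]
        ring
    _ ≤ w i * ‖f i‖ ^ 2 * (c * u i) :=
        mul_le_mul_of_nonneg_left (hwu i) (mul_nonneg (hw i) (sq_nonneg _))
    _ = c * ⟪w i • f i, u i • f i⟫ := by
        rw [real_inner_smul_left, real_inner_smul_right, real_inner_self_eq_norm_sq]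
        ring

end SquareSummable

section LatticeSchrodinger

variable {G E ι : Type*} [AddGroup G] [Fintype ι]

/-- The negative second difference in direction `e`, a summand of the discrete Laplacian. -/
def secondDiff [AddCommGroup E] (e : G) (v : G → E) (z : G) : E :=
  (v z - v (z + e)) - (v (z - e) - v z)

/-- The Schrödinger operator with potential `u` on a group, whose kinetic part is `a`
times the sum of the negative second differences along the steps `e j`. -/
def latticeSchrodinger [AddCommGroup E] [Module ℝ E] (a : ℝ) (e : ι → G) (u : G → ℝ) (v : G → E)
    (z : G) : E :=
  a • ∑ j, secondDiff (e j) v z + u z • v z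

variable [NormedAddCommGroup E]

lemma memℓp_secondDiff (e : G) {v : G → E} {p : ENNReal} (hv : Memℓp v p) :
    Memℓp (secondDiff e v) p :=
  (hv.sub (memℓp_comp_injective (add_left_injective e) hv)).sub
    ((memℓp_comp_injective (sub_left_injective (b := e)) hv).sub hv)

lemma memℓp_sum_secondDiff (e : ι → G) {v : G → E} {p : ENNReal} (hv : Memℓp v p) :
    Memℓp (fun z => ∑ j, secondDiff (e j) v z) p :=
  Memℓp.finsetSum Finset.univ fun j _ => memℓp_secondDiff (e j) hv

lemma memℓp_latticeSchrodinger [NormedSpace ℝ E] (a : ℝ) (e : ι → G) {u : G → ℝ} {v : G → E}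
    {p : ENNReal} (hv : Memℓp v p) (huv : Memℓp (fun z => u z • v z) p) :
    Memℓp (latticeSchrodinger a e u v) p :=
  ((memℓp_sum_secondDiff e hv).const_smul a).add huv

variable [InnerProductSpace ℝ E]

lemma tsum_inner_secondDiff (e : G) {f g : G → E} (hf : Memℓp f 2) (hg : Memℓp g 2) :
    ∑' z, ⟪f z, secondDiff e g z⟫ = ∑' z, ⟪f z - f (z + e), g z - g (z + e)⟫ := by
  have hfe : Memℓp (fun z => f (z + e)) 2 := memℓp_comp_injective (add_left_injective e) hf
  have hD : Memℓp (fun z => g z - g (z + e)) 2 :=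
    hg.sub (memℓp_comp_injective (add_left_injective e) hg)
  have hD' : Memℓp (fun z => g (z - e) - g z) 2 :=
    (memℓp_comp_injective (sub_left_injective (b := e)) hg).sub hg
  have hshift : ∑' z, ⟪f z, g (z - e) - g z⟫ = ∑' z, ⟪f (z + e), g z - g (z + e)⟫ := by
    simpa using ((Equiv.addRight e).tsum_eq fun z => ⟪f z, g (z - e) - g z⟫).symm
  simp only [secondDiff, inner_sub_right (f _) (_ - _), inner_sub_left (f _) (f _)]
  rw [(summable_inner_of_memℓp hf hD).tsum_sub (summable_inner_of_memℓp hf hD'),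
    (summable_inner_of_memℓp hf hD).tsum_sub (summable_inner_of_memℓp hfe hD), hshift]

lemma neg_le_inner_smul_sub_smul {p q K : ℝ} (hp : 0 ≤ p) (hq : 0 ≤ q)
    (hpq : |p - q| ≤ K * min p q) (x y : E) :
    -(K ^ 2 / 4 * (q * ‖y‖ ^ 2)) ≤ ⟪p • x - q • y, x - y⟫ := by
  set m := min p q
  have hm : 0 ≤ m := le_min hp hq
  have hcross : -(K * m * (‖y‖ * ‖x - y‖)) ≤ (p - q) * ⟪y, x - y⟫ := by
    refine (neg_le_neg ?_).trans (neg_abs_le _)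
    rw [abs_mul]
    exact mul_le_mul hpq (abs_real_inner_le_norm y _) (abs_nonneg _) ((abs_nonneg _).trans hpq)
  calc -(K ^ 2 / 4 * (q * ‖y‖ ^ 2)) ≤ -(K ^ 2 / 4 * (m * ‖y‖ ^ 2)) := by
        gcongr
        exact min_le_right p q
    _ ≤ m * (‖x - y‖ - K / 2 * ‖y‖) ^ 2 - K ^ 2 / 4 * (m * ‖y‖ ^ 2) := by
        linarith [mul_nonneg hm (sq_nonneg (‖x - y‖ - K / 2 * ‖y‖))]
    _ = m * ‖x - y‖ ^ 2 - K * m * (‖y‖ * ‖x - y‖) := by ring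
    _ ≤ p * ‖x - y‖ ^ 2 + (p - q) * ⟪y, x - y⟫ := by
        rw [sub_eq_add_neg]
        gcongr
        exact min_le_left p q
    _ = ⟪p • (x - y) + (p - q) • y, x - y⟫ := by
        rw [inner_add_left, real_inner_smul_left, real_inner_smul_left, real_inner_self_eq_norm_sq]
    _ = ⟪p • x - q • y, x - y⟫ := by
        rw [smul_sub, sub_smul, sub_add_sub_cancel]

variable {w u : G → ℝ} {v : G → E} {K : ℝ}

lemma neg_le_tsum_inner_smul_secondDiff (e : G) (hw : ∀ z, 0 ≤ w z)
    (hwK : ∀ z, |w z - w (z + e)| ≤ K * min (w z) (w (z + e)))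
    (hv : Memℓp v 2) (hwv : Memℓp (fun z => w z • v z) 2) :
    -(K ^ 2 / 4 * ∑' z, ⟪w z • v z, v z⟫) ≤ ∑' z, ⟪w z • v z, secondDiff e v z⟫ := by
  have hshift : ∑' z, ⟪w (z + e) • v (z + e), v (z + e)⟫ = ∑' z, ⟪w z • v z, v z⟫ :=
    (Equiv.addRight e).tsum_eq fun z => ⟪w z • v z, v z⟫
  have hve := memℓp_comp_injective (add_left_injective e) hv
  have hwve := memℓp_comp_injective (add_left_injective e) hwv
  rw [tsum_inner_secondDiff e hwv hv, ← hshift, ← tsum_mul_left, ← tsum_neg]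
  refine Summable.tsum_le_tsum (fun z => ?_)
    ((summable_inner_of_memℓp hwve hve).mul_left _).neg
    (summable_inner_of_memℓp (hwv.sub hwve) (hv.sub hve))
  rw [real_inner_smul_left, real_inner_self_eq_norm_sq]
  exact neg_le_inner_smul_sub_smul (hw z) (hw (z + e)) (hwK z) (v z) (v (z + e))

variable {a c : ℝ}

lemma tsum_inner_smul_potential_le (ha : 0 ≤ a) (e : ι → G) (hw : ∀ z, 0 ≤ w z)
    (hwK : ∀ j z, |w z - w (z + e j)| ≤ K * min (w z) (w (z + e j)))
    (hv : Memℓp v 2) (huv : Memℓp (fun z => u z • v z) 2)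
    (hwv : Memℓp (fun z => w z • v z) 2) :
    ∑' z, ⟪w z • v z, u z • v z⟫ ≤
      ∑' z, ⟪w z • v z, latticeSchrodinger a e u v z⟫ +
        a * (Fintype.card ι * (K ^ 2 / 4)) * ∑' z, ⟪w z • v z, v z⟫ := by
  have hsplit : ∑' z, ⟪w z • v z, latticeSchrodinger a e u v z⟫ =
      a * ∑ j, ∑' z, ⟪w z • v z, secondDiff (e j) v z⟫ + ∑' z, ⟪w z • v z, u z • v z⟫ := by
    have hΔ := summable_inner_of_memℓp hwv (memℓp_sum_secondDiff e hv)
    simp only [latticeSchrodinger, inner_add_right, real_inner_smul_right _ _ a]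
    rw [(hΔ.mul_left a).tsum_add (summable_inner_of_memℓp hwv huv), tsum_mul_left]
    simp only [inner_sum]
    rw [Summable.tsum_finsetSum fun j _ =>
      summable_inner_of_memℓp hwv (memℓp_secondDiff (e j) hv)]
  have hkinetic : -(Fintype.card ι * (K ^ 2 / 4 * ∑' z, ⟪w z • v z, v z⟫)) ≤
      ∑ j, ∑' z, ⟪w z • v z, secondDiff (e j) v z⟫ := by
    simpa using Finset.sum_le_sum fun j (_ : j ∈ Finset.univ) =>
      neg_le_tsum_inner_smul_secondDiff (e j) hw (hwK j) hv hwv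
  linarith [mul_le_mul_of_nonneg_left hkinetic ha]

lemma l2Norm_smul_le (ha : 0 ≤ a) (hc : 0 ≤ c) (e : ι → G) (hw : ∀ z, 0 ≤ w z)
    (hwu : ∀ z, w z ≤ c * u z)
    (hwK : ∀ j z, |w z - w (z + e j)| ≤ K * min (w z) (w (z + e j)))
    (hv : Memℓp v 2) (huv : Memℓp (fun z => u z • v z) 2) :
    l2Norm (fun z => w z • v z) ≤
      c * (l2Norm (latticeSchrodinger a e u v) +
        a * (Fintype.card ι * (K ^ 2 / 4)) * l2Norm v) := by
  have hwv := memℓp_smul_of_le hw hwu huv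
  set A := l2Norm fun z => w z • v z
  set B := l2Norm (latticeSchrodinger a e u v)
  set M := a * (Fintype.card ι * (K ^ 2 / 4))
  have hA : 0 ≤ A := l2Norm_nonneg _
  have hB : 0 ≤ B := l2Norm_nonneg _
  have hD : 0 ≤ l2Norm v := l2Norm_nonneg v
  have hquad : A * A ≤ c * (B + M * l2Norm v) * A :=
    calc A * A = A ^ 2 := (sq A).symm
      _ ≤ c * ∑' z, ⟪w z • v z, u z • v z⟫ := l2Norm_smul_sq_le hw hwu huv
      _ ≤ c * (∑' z, ⟪w z • v z, latticeSchrodinger a e u v z⟫ +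
            M * ∑' z, ⟪w z • v z, v z⟫) := by
          gcongr
          exact tsum_inner_smul_potential_le ha e hw hwK hv huv hwv
      _ ≤ c * (A * B + M * (A * l2Norm v)) := by
          gcongr
          · exact tsum_inner_le_l2Norm_mul_l2Norm hwv (memℓp_latticeSchrodinger a e hv huv)
          · exact tsum_inner_le_l2Norm_mul_l2Norm hwv hv
      _ = c * (B + M * l2Norm v) * A := by ring
  rcases hA.eq_or_lt with hA₀ | hA₀
  · rw [← hA₀]
    positivity
  · exact le_of_mul_le_mul_right hquad hA₀

lemma l2Norm_potential_smul_le (ha : 0 ≤ a) (hc : 0 ≤ c) (e : ι → G) (hu : ∀ z, 0 ≤ u z)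
    (huw : ∀ z, u z ≤ w z) (hwu : ∀ z, w z ≤ c * u z)
    (hwK : ∀ j z, |w z - w (z + e j)| ≤ K * min (w z) (w (z + e j)))
    (hv : Memℓp v 2) (huv : Memℓp (fun z => u z • v z) 2) :
    l2Norm (fun z => u z • v z) ≤
      c * (l2Norm (latticeSchrodinger a e u v) +
        a * (Fintype.card ι * (K ^ 2 / 4)) * l2Norm v) := by
  have hw : ∀ z, 0 ≤ w z := fun z => (hu z).trans (huw z)
  refine (l2Norm_mono (memℓp_smul_of_le hw hwu huv) fun z => ?_).trans
    (l2Norm_smul_le ha hc e hw hwu hwK hv huv)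
  rw [norm_smul, norm_smul]
  gcongr
  exact abs_le_abs_of_nonneg (hu z) (huw z)

end LatticeSchrodinger

lemma normh_eq_sqrt_mul_l2Norm (d : ℕ) {h : ℝ} (hh : 0 ≤ h) (v : Zd d → ℂ) :
    normh d h v = √(h ^ d) * l2Norm v :=
  Real.sqrt_mul (pow_nonneg hh d) _

lemma discSchrodinger_eq_latticeSchrodinger (d : ℕ) (h : ℝ) (V : Euc d → ℝ) (v : Zd d → ℂ) :
    discSchrodinger d h V v =
      latticeSchrodinger (h ^ 2)⁻¹ (fun j => Pi.single j 1) (fun z => V (latPt d h z)) v := by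
  funext z
  have hdiff : ∀ j : Fin d, 2 * v z - v (z + Pi.single j 1) - v (z - Pi.single j 1) =
      secondDiff (Pi.single j 1) v z := fun j => by
    rw [secondDiff]
    ring
  simp only [discSchrodinger, latticeSchrodinger, hdiff, Complex.real_smul, ofReal_inv, ofReal_pow]

lemma dist_latPt_add_single (d : ℕ) {h : ℝ} (hh : 0 ≤ h) (z : Zd d) (j : Fin d) :
    dist (latPt d h z) (latPt d h (z + Pi.single j 1)) = h := by
  have hstep : latPt d h (z + Pi.single j 1) = latPt d h z + EuclideanSpace.single j h := by
    ext i
    rcases eq_or_ne i j with rfl | hij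
    · simp [latPt, mul_add]
    · simp [latPt, hij]
  rw [hstep, dist_self_add_right, PiLp.norm_single, Real.norm_of_nonneg hh]

lemma l2Norm_potential_le_l2Norm_discSchrodinger (d : ℕ) {V : Euc d → ℝ} (hV : ∀ x, 0 ≤ V x)
    {c : ℝ} (hc : 0 ≤ c) (hVc : ∀ x y : Euc d, dist x y ≤ 1 → V y ≤ c * V x)
    {h : ℝ} (hh : 0 < h) (hh1 : h ≤ 1) {v : Zd d → ℂ} (hv : Memℓp v 2)
    (hVv : Memℓp (fun z => (V (latPt d h z) : ℂ) * v z) 2) :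
    l2Norm (fun z => (V (latPt d h z) : ℂ) * v z) ≤
      c * (l2Norm (discSchrodinger d h V v) + d * (c ^ 4 / 4) * l2Norm v) := by
  let W : Zd d → ℝ := fun z => tentEnvelope V (latPt d h z)
  have hslow : ∀ (j : Fin d) (z : Zd d),
      |W z - W (z + Pi.single j 1)| ≤ c ^ 2 * h * min (W z) (W (z + Pi.single j 1)) :=
    fun j z => by
      have hdist := dist_latPt_add_single d hh.le z j
      simpa only [hdist] using abs_tentEnvelope_sub_le hV hc hVc (hdist.trans_le hh1)
  have hscale : (h ^ 2)⁻¹ * (Fintype.card (Fin d) * ((c ^ 2 * h) ^ 2 / 4)) = d * (c ^ 4 / 4) := by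
    rw [Fintype.card_fin]
    field_simp
  simp only [discSchrodinger_eq_latticeSchrodinger, ← Complex.real_smul, ← hscale] at hVv ⊢
  exact l2Norm_potential_smul_le (inv_nonneg.2 (sq_nonneg h)) hc _ (fun z => hV (latPt d h z))
    (fun z => le_tentEnvelope hV hVc (latPt d h z))
    (fun z => tentEnvelope_le hV hVc (latPt d h z)) hslow hv hVv

theorem potential_relatively_bounded_discrete_uniform_general (d : ℕ) {V : Euc d → ℝ}
    (hV : ∀ x, 0 ≤ V x) {c : ℝ} (hc : 0 < c)
    (hVc : ∀ x y : Euc d, dist x y ≤ 1 → V y ≤ c * V x) :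
    ∃ C > (0 : ℝ), ∀ h : ℝ, 0 < h → h ≤ 1 →
      ∀ v : Zd d → ℂ, Memℓp v 2 → Memℓp (fun z => (V (latPt d h z) : ℂ) * v z) 2 →
        normh d h (fun z => (V (latPt d h z) : ℂ) * v z) ≤
          C * (normh d h (discSchrodinger d h V v) + normh d h v) := by
  refine ⟨c * (1 + d * (c ^ 4 / 4)), by positivity, fun h hh hh1 v hv hVv => ?_⟩
  simp only [normh_eq_sqrt_mul_l2Norm d hh.le]
  set A := l2Norm fun z => (V (latPt d h z) : ℂ) * v z
  set B := l2Norm (discSchrodinger d h V v)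
  have hB : 0 ≤ B := l2Norm_nonneg _
  have hv₀ : 0 ≤ l2Norm v := l2Norm_nonneg v
  calc √(h ^ d) * A ≤ √(h ^ d) * (c * (B + d * (c ^ 4 / 4) * l2Norm v)) := by
        gcongr
        exact l2Norm_potential_le_l2Norm_discSchrodinger d hV hc.le hVc hh hh1 hv hVv
    _ ≤ √(h ^ d) * (c * ((1 + d * (c ^ 4 / 4)) * (B + l2Norm v))) := by
        gcongr
        linarith [show 0 ≤ d * (c ^ 4 / 4) * B by positivity]
    _ = c * (1 + d * (c ^ 4 / 4)) * (√(h ^ d) * B + √(h ^ d) * l2Norm v) := by ring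

/-- Let `V : ℝ^d → ℝ` be continuous with `V ≥ 1`, with `V⁻¹` uniformly
continuous and `c₁⁻¹ V(x) ≤ V(y) ≤ c₁ V(x)` whenever `|x−y| ≤ 1`.  Then `V` is `H_h`-bounded
uniformly in the mesh size:  there is `C > 0`, independent of `h ∈ (0,1]`, such that for every
finitely supported `v : hℤ^d → ℂ`, `‖V v‖_h ≤ C (‖H_h v‖_h + ‖v‖_h)`. -/
theorem potential_relatively_bounded_discrete_uniform
    (d : ℕ) (V : Euc d → ℝ)
    (hVcont : Continuous V) (hV1 : ∀ x, 1 ≤ V x)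
    (hVinv : UniformContinuous fun x => (V x)⁻¹)
    (c₁ : ℝ) (hc₁ : 0 < c₁)
    (hVcomp : ∀ x y : Euc d, dist x y ≤ 1 → c₁⁻¹ * V x ≤ V y ∧ V y ≤ c₁ * V x) :
    ∃ C > (0 : ℝ), ∀ h : ℝ, 0 < h → h ≤ 1 →
      ∀ v : Zd d → ℂ, (Function.support v).Finite →
        normh d h (fun z => (V (latPt d h z) : ℂ) * v z) ≤
          C * (normh d h (discSchrodinger d h V v) + normh d h v) := by
  obtain ⟨C, hC, hbound⟩ := potential_relatively_bounded_discrete_uniform_general d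
    (fun x => zero_le_one.trans (hV1 x)) hc₁ fun x y hxy => (hVcomp x y hxy).2
  exact ⟨C, hC, fun h hh hh1 v hv => hbound h hh hh1 v (memℓp_of_finite_support hv 2)
    (memℓp_of_finite_support (hv.subset (Function.support_mul_subset_right _ v)) 2)⟩
end
end

section
/- Let φ ∈ 𝒮(ℝ^d) and let G : ℝ^d → ℂ be uniformly continuous. Then ‖G P_h − P_h G‖_{B(L²(ℝ^d), ℓ²(hℤ^d))} → 0 as h → 0, where G P_h − P_h G is the operator u ↦ ( z ↦ h^{−d} ∫_{ℝ^d} (G(z) − G(x)) conj(φ(h⁻¹(x−z))) u(x) dx ), i.e. the commutator of the multiplication operators by G on L²(ℝ^d) and on ℓ²(hℤ^d) with P_h. -/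
open MeasureTheory Complex Real
open scoped ENNReal ComplexConjugate

noncomputable section

instance (d : ℕ) : MeasurableSingletonClass (Zd d) := by
  constructor
  intro f
  have : ({f} : Set (Zd d)) = Set.univ.pi fun j => {f j} := by
    ext g; simp [Set.eq_univ_iff_forall, funext_iff, Set.mem_pi, eq_comm]
  rw [this]
  exact MeasurableSet.univ_pi fun j => measurableSet_singleton _

/-- The measure on `ℤ^d` giving mass `h^d` to each point, so that `L²` of this measure is
`ℓ²(hℤ^d)` with norm `‖v‖_h² = h^d ∑_z |v(hz)|²`. -/
def latMeas (d : ℕ) (h : ℝ) : Measure (Zd d) := (ENNReal.ofReal (h ^ d)) • Measure.count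

/-- `L²(ℝ^d)`. -/
abbrev L2 (d : ℕ) := Lp ℂ 2 (volume : Measure (Euc d))

/-- `ℓ²(hℤ^d)`. -/
abbrev l2h (d : ℕ) (h : ℝ) := Lp ℂ 2 (latMeas d h)

/-!
Subdividing a segment shows that a uniformly continuous `G` satisfies
`|G x - G y| ≤ η (1 + |x - y| / δ)` with `η` arbitrarily small. At distances `|x - z| = h |y|` with
`h ≤ δ` the right-hand side is at most `η (1 + |y|)`, and the decay of `φ` absorbs the factor
`1 + |y|`. Hence the kernel of `G P_h - P_h G` is dominated by
`η C h⁻ᵈ (1 + |h⁻¹ (x - z)|)⁻ˢ` with `s > d`. Both the integral of this majorant in `x` and its sum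
over `z ∈ hℤᵈ` with mass `hᵈ` are at most `η C M`, where `M` does not depend on `h`, so Schur's test
bounds the operator norm by `η C M`.
-/

section SchurTest

variable {α β : Type*} [MeasurableSpace α] [MeasurableSpace β] {μ : Measure α} {ν : Measure β}

theorem lintegral_mul_rpow_le {p : ℝ} (hp : 1 ≤ p) {w f : α → ℝ≥0∞}
    (hw : AEMeasurable w μ) (hf : AEMeasurable f μ) :
    (∫⁻ x, w x * f x ∂μ) ^ p ≤ (∫⁻ x, w x ∂μ) ^ (p - 1) * ∫⁻ x, w x * f x ^ p ∂μ := by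
  have hp0 : 0 < p := one_pos.trans_le hp
  have hf' : AEMeasurable f (μ.withDensity w) := hf.mono_ac (withDensity_absolutelyContinuous μ w)
  -- Jensen's inequality for the measure with density `w`
  have jensen := eLpNorm'_le_eLpNorm'_mul_rpow_measure_univ one_pos hp hf'.aestronglyMeasurable
  simp only [eLpNorm'_eq_lintegral_enorm, enorm_eq_self, ENNReal.rpow_one, div_one,
    withDensity_apply _ MeasurableSet.univ, Measure.restrict_univ] at jensen
  rw [lintegral_withDensity_eq_lintegral_mul₀ hw hf,
    lintegral_withDensity_eq_lintegral_mul₀ hw (hf.pow_const p)] at jensen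
  calc (∫⁻ x, w x * f x ∂μ) ^ p
      ≤ ((∫⁻ x, w x * f x ^ p ∂μ) ^ (1 / p) * (∫⁻ x, w x ∂μ) ^ (1 - 1 / p)) ^ p :=
        ENNReal.rpow_le_rpow jensen hp0.le
    _ = (∫⁻ x, w x ∂μ) ^ (p - 1) * ∫⁻ x, w x * f x ^ p ∂μ := by
        rw [ENNReal.mul_rpow_of_nonneg _ _ hp0.le, ← ENNReal.rpow_mul, ← ENNReal.rpow_mul,
          one_div_mul_cancel hp0.ne', sub_mul, one_div_mul_cancel hp0.ne', one_mul,
          ENNReal.rpow_one, mul_comm]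

variable [SFinite μ] [SFinite ν]

theorem lintegral_rpow_lintegral_mul_le {p : ℝ} (hp : 1 ≤ p) {k : β → α → ℝ≥0∞}
    (hk : Measurable (Function.uncurry k)) {A B : ℝ≥0∞} (hA : ∀ b, ∫⁻ a, k b a ∂μ ≤ A)
    (hB : ∀ a, ∫⁻ b, k b a ∂ν ≤ B) {f : α → ℝ≥0∞} (hf : AEMeasurable f μ) :
    ∫⁻ b, (∫⁻ a, k b a * f a ∂μ) ^ p ∂ν ≤ A ^ (p - 1) * B * ∫⁻ a, f a ^ p ∂μ := by
  have hfp : AEMeasurable (fun a => f a ^ p) μ := hf.pow_const p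
  have hkf : AEMeasurable (fun z : β × α => k z.1 z.2 * f z.2 ^ p) (ν.prod μ) :=
    hk.aemeasurable.mul hfp.comp_snd
  calc ∫⁻ b, (∫⁻ a, k b a * f a ∂μ) ^ p ∂ν
      ≤ ∫⁻ b, A ^ (p - 1) * ∫⁻ a, k b a * f a ^ p ∂μ ∂ν := by
        refine lintegral_mono fun b => ?_
        refine (lintegral_mul_rpow_le hp hk.of_uncurry_left.aemeasurable hf).trans ?_
        gcongr
        exact hA b
    _ = A ^ (p - 1) * ∫⁻ a, (∫⁻ b, k b a ∂ν) * f a ^ p ∂μ := by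
        rw [lintegral_const_mul'' _ hkf.lintegral_prod_right', lintegral_lintegral_swap hkf]
        congr! 3 with a
        exact lintegral_mul_const (f a ^ p) (hk.of_uncurry_right (y := a))
    _ ≤ A ^ (p - 1) * ∫⁻ a, B * f a ^ p ∂μ := by
        gcongr with a
        exact hB a
    _ = A ^ (p - 1) * B * ∫⁻ a, f a ^ p ∂μ := by
        rw [lintegral_const_mul'' _ hfp, mul_assoc]

theorem eLpNorm_lintegral_mul_le {p : ℝ≥0∞} (hp : 1 ≤ p) {k : β → α → ℝ≥0∞}
    (hk : Measurable (Function.uncurry k)) {A B : ℝ≥0∞} (hA : ∀ b, ∫⁻ a, k b a ∂μ ≤ A)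
    (hB : ∀ a, ∫⁻ b, k b a ∂ν ≤ B) {f : α → ℝ≥0∞} (hf : AEMeasurable f μ) :
    eLpNorm (fun b => ∫⁻ a, k b a * f a ∂μ) p ν ≤
      A ^ (1 - 1 / p.toReal) * B ^ (1 / p.toReal) * eLpNorm f p μ := by
  rcases eq_or_ne p ∞ with rfl | hp_top
  · simp only [eLpNorm_exponent_top, ENNReal.toReal_top, div_zero, sub_zero, ENNReal.rpow_one,
      ENNReal.rpow_zero, mul_one]
    refine eLpNormEssSup_le_of_ae_enorm_bound (.of_forall fun b => ?_)
    calc ∫⁻ a, k b a * f a ∂μ ≤ ∫⁻ a, k b a * eLpNormEssSup f μ ∂μ := by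
          refine lintegral_mono_ae ?_
          filter_upwards [enorm_ae_le_eLpNormEssSup f μ] with a ha
          gcongr
          exact ha
      _ = (∫⁻ a, k b a ∂μ) * eLpNormEssSup f μ := lintegral_mul_const _ hk.of_uncurry_left
      _ ≤ A * eLpNormEssSup f μ := by gcongr; exact hA b
  · have hp0 : p ≠ 0 := (one_pos.trans_le hp).ne'
    have hp1 : 1 ≤ p.toReal := by simpa using ENNReal.toReal_mono hp_top hp
    have hpos : 0 < p.toReal := one_pos.trans_le hp1
    rw [eLpNorm_eq_lintegral_rpow_enorm_toReal hp0 hp_top,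
      eLpNorm_eq_lintegral_rpow_enorm_toReal hp0 hp_top]
    simp only [enorm_eq_self]
    refine (ENNReal.rpow_le_rpow (lintegral_rpow_lintegral_mul_le hp1 hk hA hB hf)
      (by positivity)).trans_eq ?_
    rw [ENNReal.mul_rpow_of_nonneg _ _ (by positivity), ENNReal.mul_rpow_of_nonneg _ _
      (by positivity), ← ENNReal.rpow_mul, sub_mul, mul_one_div_cancel hpos.ne', one_mul]

theorem opNorm_le_of_lintegral_enorm_kernel_le {𝕜 E : Type*} [NontriviallyNormedField 𝕜]
    [NormedAddCommGroup E] [NormedSpace 𝕜 E] [NormedSpace ℝ E] {p : ℝ≥0∞} [Fact (1 ≤ p)]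
    {K : β → α → 𝕜} (hK : StronglyMeasurable (Function.uncurry K)) {A B : NNReal}
    (hA : ∀ b, ∫⁻ a, ‖K b a‖ₑ ∂μ ≤ A) (hB : ∀ a, ∫⁻ b, ‖K b a‖ₑ ∂ν ≤ B)
    {T : Lp E p μ →L[𝕜] Lp E p ν} (hT : ∀ u, T u =ᵐ[ν] fun b => ∫ a, K b a • u a ∂μ) :
    ‖T‖ ≤ A ^ (1 - 1 / p.toReal) * B ^ (1 / p.toReal) := by
  have hθ₀ : 0 ≤ 1 / p.toReal := by positivity
  have hθ₁ : 0 ≤ 1 - 1 / p.toReal := by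
    simpa using ENNReal.toReal_mono ENNReal.one_ne_top
      (ENNReal.inv_le_one.2 (Fact.out : 1 ≤ p))
  refine T.opNorm_le_bound (by positivity) fun u => ?_
  have bound : ‖T u‖ₑ ≤ (A ^ (1 - 1 / p.toReal) * B ^ (1 / p.toReal) : NNReal) * ‖u‖ₑ := by
    calc ‖T u‖ₑ ≤ eLpNorm (fun b => ∫⁻ a, ‖K b a‖ₑ * ‖u a‖ₑ ∂μ) p ν := by
          rw [Lp.enorm_def]
          refine eLpNorm_mono_enorm_ae ?_
          filter_upwards [hT u] with b hb
          rw [hb, enorm_eq_self]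
          simpa only [enorm_smul] using enorm_integral_le_lintegral_enorm fun a => K b a • u a
      _ ≤ A ^ (1 - 1 / p.toReal) * B ^ (1 / p.toReal) * eLpNorm (fun a => ‖u a‖ₑ) p μ :=
          eLpNorm_lintegral_mul_le Fact.out hK.enorm hA hB (Lp.aestronglyMeasurable u).enorm
      _ = (A ^ (1 - 1 / p.toReal) * B ^ (1 / p.toReal) : NNReal) * ‖u‖ₑ := by
          rw [eLpNorm_enorm, Lp.enorm_def, ENNReal.coe_mul, ENNReal.coe_rpow_of_nonneg _ hθ₁,
            ENNReal.coe_rpow_of_nonneg _ hθ₀]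
  rw [enorm_eq_nnnorm, enorm_eq_nnnorm] at bound
  exact_mod_cast bound

end SchurTest

section UniformContinuity

variable {E F : Type*} [SeminormedAddCommGroup E] [NormedSpace ℝ E] [PseudoMetricSpace F]
  {f : E → F} {x y : E}

theorem dist_le_nat_mul_of_dist_lt_nat_mul {ε δ : ℝ}
    (hf : ∀ ⦃x y⦄, dist x y < δ → dist (f x) (f y) ≤ ε) {n : ℕ} (hn : 0 < n)
    (hxy : dist x y < n * δ) : dist (f x) (f y) ≤ n * ε := by
  have hn' : (0 : ℝ) < n := Nat.cast_pos.2 hn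
  let g : ℕ → F := fun k => f (AffineMap.lineMap x y ((k : ℝ) / n))
  have step : ∀ k, dist (g k) (g (k + 1)) ≤ ε := fun k => by
    refine hf ?_
    rw [dist_lineMap_lineMap, Real.dist_eq, ← sub_div, abs_div, Nat.abs_cast]
    simpa [inv_mul_lt_iff₀ hn'] using hxy
  calc dist (f x) (f y) = dist (g 0) (g n) := by simp [g, hn'.ne']
    _ ≤ ∑ _k ∈ Finset.range n, ε := dist_le_range_sum_of_dist_le n fun _ => step _
    _ = n * ε := by simp

theorem exists_dist_le_mul_one_add_dist_div_of_uniformContinuous (hf : UniformContinuous f) {ε : ℝ}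
    (hε : 0 < ε) :
    ∃ δ > 0, ∀ x y, dist (f x) (f y) ≤ ε * (1 + dist x y / δ) := by
  obtain ⟨δ, hδ, hfδ⟩ := Metric.uniformContinuous_iff.1 hf ε hε
  refine ⟨δ, hδ, fun x y => ?_⟩
  have hlt : dist x y < (⌊dist x y / δ⌋₊ + 1 : ℕ) * δ := by
    rw [← div_lt_iff₀ hδ]
    exact_mod_cast Nat.lt_floor_add_one (dist x y / δ)
  calc dist (f x) (f y) ≤ (⌊dist x y / δ⌋₊ + 1 : ℕ) * ε :=
        dist_le_nat_mul_of_dist_lt_nat_mul (fun _ _ h => (hfδ h).le) (Nat.succ_pos _) hlt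
    _ ≤ ε * (1 + dist x y / δ) := by
        rw [mul_comm, Nat.cast_succ, add_comm]
        gcongr
        exact Nat.floor_le (by positivity)

end UniformContinuity

section DecayWeight

variable {E : Type*} [NormedAddCommGroup E] {r : ℝ}

/-- The weight `(1 + ‖y‖)⁻ʳ` against which kernels are compared, with values in `ℝ≥0∞` so that its
integrals and its sums over separated families need no convergence side conditions. -/
def decayWeight (r : ℝ) (y : E) : ℝ≥0∞ := ENNReal.ofReal ((1 + ‖y‖) ^ (-r))

theorem decayWeight_le_of_dist_le_one (hr : 0 ≤ r) {x y : E} (hxy : dist x y ≤ 1) :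
    decayWeight r x ≤ ENNReal.ofReal (2 ^ r) * decayWeight r y := by
  have hle : 1 + ‖y‖ ≤ 2 * (1 + ‖x‖) := by
    have := norm_le_norm_add_norm_sub x y
    rw [← dist_eq_norm] at this
    linarith [norm_nonneg x]
  rw [decayWeight, decayWeight, ← ENNReal.ofReal_mul (by positivity)]
  refine ENNReal.ofReal_le_ofReal ?_
  calc (1 + ‖x‖) ^ (-r) = 2 ^ r * (2 * (1 + ‖x‖)) ^ (-r) := by
        rw [Real.mul_rpow (by positivity) (by positivity), ← mul_assoc,
          ← Real.rpow_add two_pos, add_neg_cancel, Real.rpow_zero, one_mul]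
    _ ≤ 2 ^ r * (1 + ‖y‖) ^ (-r) := by
        gcongr 2 ^ r * ?_
        exact Real.rpow_le_rpow_of_nonpos (by positivity) hle (neg_nonpos.2 hr)

variable [MeasurableSpace E] [BorelSpace E]

theorem measurable_decayWeight : Measurable (decayWeight r : E → ℝ≥0∞) := by
  unfold decayWeight
  fun_prop

variable [NormedSpace ℝ E] [FiniteDimensional ℝ E] {μ : Measure E} [μ.IsAddHaarMeasure]

theorem tsum_decayWeight_sub_le {ι : Type*} [Countable ι] {x : ι → E}
    (hx : Pairwise fun i j => 1 ≤ dist (x i) (x j)) (hr : 0 ≤ r) (y : E) :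
    ∑' i, decayWeight r (y - x i) ≤
      ENNReal.ofReal (2 ^ r) * (∫⁻ a, decayWeight r a ∂μ) / μ (Metric.ball 0 (1 / 2)) := by
  have hdisj : Pairwise (Function.onFun Disjoint fun i => Metric.ball (x i) (1 / 2)) :=
    fun i j hij => Metric.ball_disjoint_ball (by linarith [hx hij])
  rw [ENNReal.le_div_iff_mul_le (.inl (Metric.measure_ball_pos _ _ (by norm_num)).ne')
    (.inl measure_ball_lt_top.ne), ← ENNReal.tsum_mul_right]
  calc ∑' i, decayWeight r (y - x i) * μ (Metric.ball 0 (1 / 2))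
      = ∑' i, ∫⁻ _ in Metric.ball (x i) (1 / 2), decayWeight r (y - x i) ∂μ := by
        simp only [setLIntegral_const, Measure.addHaar_ball_center μ (x _)]
    _ ≤ ∑' i, ∫⁻ a in Metric.ball (x i) (1 / 2),
          ENNReal.ofReal (2 ^ r) * decayWeight r (y - a) ∂μ := by
        refine ENNReal.tsum_le_tsum fun i => setLIntegral_mono' measurableSet_ball fun a ha => ?_
        refine decayWeight_le_of_dist_le_one hr ?_
        rw [dist_sub_left, dist_comm]
        linarith [Metric.mem_ball.1 ha]
    _ = ∫⁻ a in ⋃ i, Metric.ball (x i) (1 / 2),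
          ENNReal.ofReal (2 ^ r) * decayWeight r (y - a) ∂μ :=
        (lintegral_iUnion (fun _ => measurableSet_ball) hdisj _).symm
    _ ≤ ∫⁻ a, ENNReal.ofReal (2 ^ r) * decayWeight r (y - a) ∂μ := setLIntegral_le_lintegral _ _
    _ = ENNReal.ofReal (2 ^ r) * ∫⁻ a, decayWeight r a ∂μ := by
        rw [lintegral_const_mul' _ _ ENNReal.ofReal_ne_top, lintegral_sub_left_eq_self]

end DecayWeight

theorem lintegral_comp_inv_smul_sub {E : Type*} [NormedAddCommGroup E] [NormedSpace ℝ E]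
    [FiniteDimensional ℝ E] [MeasurableSpace E] [BorelSpace E] {μ : Measure E} [μ.IsAddHaarMeasure]
    {f : E → ℝ≥0∞} (hf : Measurable f) {h : ℝ} (hh : 0 < h) (a : E) :
    ∫⁻ x, f (h⁻¹ • (x - a)) ∂μ = ENNReal.ofReal (h ^ Module.finrank ℝ E) * ∫⁻ x, f x ∂μ := by
  rw [lintegral_sub_right_eq_self (fun x => f (h⁻¹ • x)) a,
    ← lintegral_map hf (measurable_const_smul h⁻¹),
    Measure.map_addHaar_smul μ (inv_ne_zero hh.ne'), lintegral_smul_measure, inv_pow, inv_inv,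
    abs_of_pos (pow_pos hh _), smul_eq_mul]

theorem exists_norm_schwartzMap_le_rpow_neg {E F : Type*} [NormedAddCommGroup E] [NormedSpace ℝ E]
    [NormedAddCommGroup F] [NormedSpace ℝ F] (φ : SchwartzMap E F) (k : ℕ) :
    ∃ C : ℝ, ∀ y, ‖φ y‖ ≤ C * (1 + ‖y‖) ^ (-(k : ℝ)) := by
  refine ⟨2 ^ k * (Finset.Iic (k, 0)).sup (fun m => SchwartzMap.seminorm ℝ m.1 m.2) φ, fun y => ?_⟩
  have hpos : 0 < 1 + ‖y‖ := by positivity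
  rw [Real.rpow_neg hpos.le, Real.rpow_natCast, ← div_eq_mul_inv, le_div_iff₀' (by positivity)]
  simpa only [norm_iteratedFDeriv_zero] using
    SchwartzMap.one_add_le_sup_seminorm_apply (𝕜 := ℝ) (m := (k, 0)) le_rfl le_rfl φ y

section Lattice

variable {d : ℕ} {h : ℝ}

theorem one_le_dist_latPt {z z' : Zd d} (hz : z ≠ z') : 1 ≤ dist (latPt d 1 z) (latPt d 1 z') := by
  obtain ⟨j, hj⟩ := Function.ne_iff.1 hz
  calc (1 : ℝ) ≤ ((|z j - z' j| : ℤ) : ℝ) := by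
        exact_mod_cast Int.one_le_abs (sub_ne_zero.2 hj)
    _ = ‖(latPt d 1 z - latPt d 1 z') j‖ := by simp [latPt]
    _ ≤ dist (latPt d 1 z) (latPt d 1 z') := by
        rw [dist_eq_norm]
        exact PiLp.norm_apply_le _ j

theorem inv_smul_sub_latPt (hh : h ≠ 0) (x : Euc d) (z : Zd d) :
    h⁻¹ • (x - latPt d h z) = h⁻¹ • x - latPt d 1 z := by
  ext j
  simp [latPt, mul_sub, hh]

theorem lintegral_latMeas (f : Zd d → ℝ≥0∞) :
    ∫⁻ z, f z ∂(latMeas d h) = ENNReal.ofReal (h ^ d) * ∑' z, f z := by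
  rw [latMeas, lintegral_smul_measure, lintegral_count, smul_eq_mul]

instance : SFinite (latMeas d h) := by
  unfold latMeas
  infer_instance

theorem exists_lintegral_and_tsum_decayWeight_le {r : ℝ} (hr : d < r) :
    ∃ M : NNReal, ∫⁻ y : Euc d, decayWeight r y ≤ M ∧
      ∀ y, ∑' z, decayWeight r (y - latPt d 1 z) ≤ M := by
  have hI : ∫⁻ y : Euc d, decayWeight r y ≠ ∞ :=
    (finite_integral_one_add_norm (by simpa using hr)).ne
  have hS : ENNReal.ofReal (2 ^ r) * (∫⁻ y : Euc d, decayWeight r y) /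
      volume (Metric.ball (0 : Euc d) (1 / 2)) ≠ ∞ :=
    ENNReal.div_ne_top (ENNReal.mul_ne_top ENNReal.ofReal_ne_top hI)
      (Metric.measure_ball_pos _ _ (by norm_num)).ne'
  obtain ⟨M, hM, -⟩ := ENNReal.lt_iff_exists_nnreal_btwn.1 (max_lt hI.lt_top hS.lt_top)
  have hr0 : 0 ≤ r := d.cast_nonneg.trans hr.le
  refine ⟨M, (le_max_left _ _).trans hM.le, fun y => ?_⟩
  exact (tsum_decayWeight_sub_le (fun _ _ => one_le_dist_latPt) hr0 y).trans
    ((le_max_right _ _).trans hM.le)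

theorem opNorm_le_of_enorm_kernel_le_rescaled (hh : 0 < h) {K : Zd d → Euc d → ℂ}
    (hK : StronglyMeasurable (Function.uncurry K)) {w : Euc d → ℝ≥0∞} (hw : Measurable w)
    {c M : NNReal}
    (hKw : ∀ z x, ‖K z x‖ₑ ≤ c * ((ENNReal.ofReal (h ^ d))⁻¹ * w (h⁻¹ • (x - latPt d h z))))
    (hI : ∫⁻ y, w y ≤ M) (hS : ∀ y, ∑' z, w (y - latPt d 1 z) ≤ M) {p : ℝ≥0∞} [Fact (1 ≤ p)]
    {T : Lp ℂ p (volume : Measure (Euc d)) →L[ℂ] Lp ℂ p (latMeas d h)}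
    (hT : ∀ u z, T u z = ∫ x, K z x * u x) : ‖T‖ ≤ c * M := by
  have hvol₀ : ENNReal.ofReal (h ^ d) ≠ 0 := by simpa using pow_pos hh d
  have hrow : ∀ z, ∫⁻ x, ‖K z x‖ₑ ≤ (c * M : NNReal) := fun z => by
    refine (lintegral_mono (hKw z)).trans ?_
    rw [lintegral_const_mul' _ _ ENNReal.coe_ne_top,
      lintegral_const_mul' _ _ (ENNReal.inv_ne_top.2 hvol₀),
      lintegral_comp_inv_smul_sub hw hh, finrank_euclideanSpace_fin,
      ENNReal.inv_mul_cancel_left hvol₀ ENNReal.ofReal_ne_top, ENNReal.coe_mul]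
    gcongr
  have hcol : ∀ x, ∫⁻ z, ‖K z x‖ₑ ∂(latMeas d h) ≤ (c * M : NNReal) := fun x => by
    refine (lintegral_mono fun z => hKw z x).trans ?_
    simp only [inv_smul_sub_latPt hh.ne']
    rw [lintegral_const_mul' _ _ ENNReal.coe_ne_top,
      lintegral_const_mul' _ _ (ENNReal.inv_ne_top.2 hvol₀), lintegral_latMeas,
      ENNReal.inv_mul_cancel_left hvol₀ ENNReal.ofReal_ne_top, ENNReal.coe_mul]
    gcongr
    exact hS _
  refine (opNorm_le_of_lintegral_enorm_kernel_le hK hrow hcol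
    fun u => .of_forall (hT u)).trans_eq ?_
  rw [← Real.rpow_add' (c * M).coe_nonneg (by simp), sub_add_cancel, Real.rpow_one, NNReal.coe_mul]

end Lattice

section Commutator

variable {d : ℕ} {h η δ C r : ℝ} {φ G : Euc d → ℂ}

/-- The integral kernel of the commutator `G P_h - P_h G`, with the lattice variable `z` indexed
by `ℤᵈ`. -/
def commutatorKernel (φ G : Euc d → ℂ) (h : ℝ) (z : Zd d) (x : Euc d) : ℂ :=
  ((h ^ d)⁻¹ : ℝ) * ((G (latPt d h z) - G x) * conj (φ (h⁻¹ • (x - latPt d h z))))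

theorem stronglyMeasurable_uncurry_commutatorKernel (hφ : Measurable φ) (hG : Measurable G) :
    StronglyMeasurable (Function.uncurry (commutatorKernel φ G h)) := by
  refine (measurable_from_prod_countable_right fun z => ?_).stronglyMeasurable
  unfold commutatorKernel
  fun_prop

theorem enorm_commutatorKernel_le (hh : 0 < h) (hhδ : h ≤ δ) (hη : 0 ≤ η)
    (hG : ∀ x y, dist (G x) (G y) ≤ η * (1 + dist x y / δ))
    (hφ : ∀ y, ‖φ y‖ ≤ C * (1 + ‖y‖) ^ (-r)) (z : Zd d) (x : Euc d) :
    ‖commutatorKernel φ G h z x‖ₑ ≤ ENNReal.ofReal (η * C) *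
      ((ENNReal.ofReal (h ^ d))⁻¹ * decayWeight (r - 1) (h⁻¹ • (x - latPt d h z))) := by
  set y := h⁻¹ • (x - latPt d h z) with hy
  have hδ : 0 < δ := hh.trans_le hhδ
  have hdist : dist (latPt d h z) x = h * ‖y‖ := by
    rw [hy, norm_smul, norm_inv, Real.norm_of_nonneg hh.le, mul_inv_cancel_left₀ hh.ne',
      dist_comm, dist_eq_norm]
  have hGy : ‖G (latPt d h z) - G x‖ ≤ η * (1 + ‖y‖) := by
    rw [← dist_eq_norm]
    refine (hG _ _).trans ?_
    rw [hdist, mul_div_right_comm]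
    gcongr
    exact mul_le_of_le_one_left (norm_nonneg y) ((div_le_one hδ).2 hhδ)
  have hprod : ‖(G (latPt d h z) - G x) * conj (φ y)‖ ≤ η * C * (1 + ‖y‖) ^ (-(r - 1)) := by
    rw [norm_mul, RCLike.norm_conj]
    calc ‖G (latPt d h z) - G x‖ * ‖φ y‖ ≤ η * (1 + ‖y‖) * (C * (1 + ‖y‖) ^ (-r)) := by
          gcongr
          exact hφ y
      _ = η * C * (1 + ‖y‖) ^ (-(r - 1)) := by
          rw [neg_sub, sub_eq_add_neg, Real.rpow_add (by positivity), Real.rpow_one]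
          ring
  have hC : 0 ≤ C := by simpa using (norm_nonneg _).trans (hφ 0)
  rw [commutatorKernel, enorm_mul, mul_left_comm, decayWeight, ← ENNReal.ofReal_mul (by positivity),
    ← ENNReal.ofReal_inv_of_pos (by positivity)]
  gcongr
  · rw [← ofReal_norm, Complex.norm_real, Real.norm_of_nonneg (by positivity)]
  · rw [← ofReal_norm]
    exact ENNReal.ofReal_le_ofReal hprod

theorem commutator_mul_projection_tendsto_zero_general {p : ℝ≥0∞} [Fact (1 ≤ p)]
    (hφ : Measurable φ) (hr : d + 1 < r) (hφr : ∀ y, ‖φ y‖ ≤ C * (1 + ‖y‖) ^ (-r))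
    (hG : UniformContinuous G) :
    ∀ ε > (0 : ℝ), ∃ h₀ > (0 : ℝ), ∀ h : ℝ, 0 < h → h < h₀ →
      ∀ T : Lp ℂ p (volume : Measure (Euc d)) →L[ℂ] Lp ℂ p (latMeas d h),
        (∀ u z, T u z = (h ^ d)⁻¹ * ∫ x, (G (latPt d h z) - G x) *
          conj (φ (h⁻¹ • (x - latPt d h z))) * u x) →
        ‖T‖ ≤ ε := by
  intro ε hε
  obtain ⟨M, hI, hS⟩ := exists_lintegral_and_tsum_decayWeight_le (d := d) (lt_sub_iff_add_lt.2 hr)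
  have hC : 0 ≤ C := by simpa using (norm_nonneg _).trans (hφr 0)
  set η := ε / (C * M + 1)
  have hη : 0 < η := by positivity
  obtain ⟨δ, hδ, hGδ⟩ := exists_dist_le_mul_one_add_dist_div_of_uniformContinuous hG hη
  refine ⟨δ, hδ, fun h hh hhδ T hT => ?_⟩
  have hker : ∀ u z, T u z = ∫ x, commutatorKernel φ G h z x * u x := fun u z => by
    simp only [hT, commutatorKernel, mul_assoc, integral_const_mul]
  calc ‖T‖ ≤ (η * C).toNNReal * M :=
        opNorm_le_of_enorm_kernel_le_rescaled hh
          (stronglyMeasurable_uncurry_commutatorKernel hφ hG.continuous.measurable)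
          measurable_decayWeight (enorm_commutatorKernel_le hh hhδ.le hη.le hGδ hφr) hI hS hker
    _ = ε * (C * M) / (C * M + 1) := by
        rw [Real.coe_toNNReal _ (by positivity)]
        ring
    _ ≤ ε := by
        rw [div_le_iff₀ (by positivity)]
        gcongr
        linarith

end Commutator

/-- Let `φ ∈ 𝒮(ℝ^d)` and `G : ℝ^d → ℂ` be uniformly continuous.  Then the
commutator `G P_h − P_h G`, i.e. the operator
`u ↦ (z ↦ h^{−d} ∫ (G(z) − G(x)) conj(φ(h⁻¹(x−z))) u(x) dx)`, tends to `0` in operator norm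
`B(L²(ℝ^d), ℓ²(hℤ^d))` as `h → 0`. -/
theorem commutator_mul_projection_tendsto_zero
    (d : ℕ) (φ : SchwartzMap (Euc d) ℂ) (G : Euc d → ℂ)
    (hG : UniformContinuous G) :
    ∀ ε > (0 : ℝ), ∃ h₀ > (0 : ℝ), ∀ h : ℝ, 0 < h → h < h₀ →
      ∀ T : L2 d →L[ℂ] l2h d h,
        (∀ u : L2 d, ∀ z : Zd d,
          (T u : Zd d → ℂ) z =
            (h ^ d)⁻¹ * ∫ x, (G (latPt d h z) - G x) *
              conj (φ (h⁻¹ • (x - latPt d h z))) * (u : Euc d → ℂ) x) →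
        ‖T‖ ≤ ε := by
  obtain ⟨C, hC⟩ := exists_norm_schwartzMap_le_rpow_neg φ (d + 2)
  exact commutator_mul_projection_tendsto_zero_general φ.continuous.measurable
    (by push_cast; linarith) hC hG
end
end

section
/- Let A and B be bounded normal operators on a complex Hilbert space. Then the Hausdorff distance between their spectra satisfies d_H(σ(A), σ(B)) ≤ ‖A − B‖. -/
/-!
Neumann series: a point `x` of `σ(a)` outside `σ(b)` satisfies `‖(x - b)⁻¹‖⁻¹ ≤ ‖a - b‖`, for
otherwise `x - a` would be too close to `x - b` to be singular. If `b` is normal, the functional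
calculus identifies `‖(x - b)⁻¹‖` with the supremum of `|x - z|⁻¹` over `z ∈ σ(b)`, so `x` lies
within `‖a - b‖` of `σ(b)`.
-/

open Metric

theorem inv_norm_resolvent_le_norm_sub {𝕜 A : Type*} [CommSemiring 𝕜] [NormedRing A]
    [HasSummableGeomSeries A] [Algebra 𝕜 A] {a b : A} {x : 𝕜} (ha : x ∈ spectrum 𝕜 a)
    (hb : x ∈ resolventSet 𝕜 b) : ‖resolvent b x‖⁻¹ ≤ ‖a - b‖ := by
  by_contra! hlt
  have h_unit : IsUnit (algebraMap 𝕜 A x - b) := hb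
  have h_near : ‖(algebraMap 𝕜 A x - a) - h_unit.unit‖ < ‖(↑h_unit.unit⁻¹ : A)‖⁻¹ := by
    rwa [h_unit.unit_spec, sub_sub_sub_cancel_left, norm_sub_rev, ← spectrum.resolvent_eq hb]
  exact ha (h_unit.unit.ofNearby _ h_near).isUnit

theorem resolvent_eq_cfc {𝕜 A : Type*} {p : A → Prop} [Field 𝕜] [StarRing 𝕜] [MetricSpace 𝕜]
    [IsTopologicalRing 𝕜] [ContinuousInv₀ 𝕜] [ContinuousStar 𝕜] [TopologicalSpace A] [Ring A]
    [StarRing A] [Algebra 𝕜 A] [ContinuousFunctionalCalculus 𝕜 A p] {b : A} {x : 𝕜} (hb : p b)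
    (hx : x ∈ resolventSet 𝕜 b) : resolvent b x = cfc (fun z ↦ (x - z)⁻¹) b := by
  have h_ne : ∀ z ∈ spectrum 𝕜 b, x - z ≠ 0 := by
    rintro z hz h
    exact hz (sub_eq_zero.mp h ▸ hx)
  rw [cfc_inv (fun z ↦ x - z) b h_ne, cfc_sub (fun _ ↦ x) (fun z ↦ z) b, cfc_const x b,
    cfc_id' 𝕜 b, resolvent]

section IsometricFunctionalCalculus

variable {𝕜 A : Type*} {p : A → Prop} [RCLike 𝕜] [NormedRing A] [StarRing A]
  [NormedAlgebra 𝕜 A] [IsometricContinuousFunctionalCalculus 𝕜 A p] {a b : A}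

theorem norm_resolvent_le_inv_infDist_spectrum {x : 𝕜} (hb : p b) (hx : x ∈ resolventSet 𝕜 b) :
    ‖resolvent b x‖ ≤ (infDist x (spectrum 𝕜 b))⁻¹ := by
  rw [resolvent_eq_cfc hb hx]
  refine norm_cfc_le (inv_nonneg.mpr infDist_nonneg) fun z hz ↦ ?_
  have h_closed : IsClosed (spectrum 𝕜 b) :=
    (ContinuousFunctionalCalculus.isCompact_spectrum b).isClosed
  have h_pos : 0 < infDist x (spectrum 𝕜 b) :=
    (h_closed.notMem_iff_infDist_pos ⟨z, hz⟩).mp fun h ↦ h hx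
  rw [norm_inv, ← dist_eq_norm]
  exact inv_anti₀ h_pos (infDist_le_dist_of_mem hz)

variable [HasSummableGeomSeries A]

theorem infDist_spectrum_le_norm_sub {x : 𝕜} (hb : p b) (hx : x ∈ spectrum 𝕜 a) :
    infDist x (spectrum 𝕜 b) ≤ ‖a - b‖ := by
  nontriviality A
  by_cases hxb : x ∈ spectrum 𝕜 b
  · exact (infDist_zero_of_mem hxb).trans_le (norm_nonneg _)
  have h_res : x ∈ resolventSet 𝕜 b := not_not.mp hxb
  have h_resolvent : IsUnit (resolvent b x) := spectrum.isUnit_resolvent.mp h_res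
  calc
    infDist x (spectrum 𝕜 b) ≤ ‖resolvent b x‖⁻¹ :=
      le_inv_of_le_inv₀ (norm_pos_iff.mpr h_resolvent.ne_zero)
        (norm_resolvent_le_inv_infDist_spectrum hb h_res)
    _ ≤ ‖a - b‖ := inv_norm_resolvent_le_norm_sub hx h_res

theorem hausdorffDist_spectrum_le_norm_sub_general (ha : p a) (hb : p b) :
    hausdorffDist (spectrum 𝕜 a) (spectrum 𝕜 b) ≤ ‖a - b‖ :=
  hausdorffDist_le_of_infDist (norm_nonneg _) (fun _ ↦ infDist_spectrum_le_norm_sub hb)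
    fun _ hx ↦ norm_sub_rev a b ▸ infDist_spectrum_le_norm_sub ha hx

end IsometricFunctionalCalculus

/-- For bounded normal operators `A`, `B` on a complex Hilbert space,
the Hausdorff distance of their spectra is at most `‖A - B‖`. -/
theorem hausdorffDist_spectrum_le_norm_sub
    {H : Type*} [NormedAddCommGroup H] [InnerProductSpace ℂ H] [CompleteSpace H]
    (A B : H →L[ℂ] H)
    (hA : A.comp (ContinuousLinearMap.adjoint A) = (ContinuousLinearMap.adjoint A).comp A)
    (hB : B.comp (ContinuousLinearMap.adjoint B) = (ContinuousLinearMap.adjoint B).comp B) :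
    Metric.hausdorffDist (spectrum ℂ A) (spectrum ℂ B) ≤ ‖A - B‖ :=
  hausdorffDist_spectrum_le_norm_sub_general (p := IsStarNormal) ⟨hA.symm⟩ ⟨hB.symm⟩
end
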